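/- Let X⁺ = 𝒜^ℕ be the one-sided full shift and let T ⊆ 𝒜 × 𝒜 be such that X₀⁺ = { x ∈ X⁺ : (x_i, x_{i+1}) ∈ T for all i ≥ 0 } is a nonempty proper subshift of X⁺ (a one-step subshift of finite type). Let (a_j)_{j≥0} be a decreasing sequence of positive reals converging to 0 with a_j ≥ 1/j for all j ≥ 1, and define φ⁺ : X⁺ → ℝ by φ⁺(x) = 0 if x ∈ X₀⁺ and φ⁺(x) = −a_j if dist(x, X₀⁺) = 2^{−j}. Then φ⁺ has a freezing phase transition at some β_c > 0, and ZTA(φ⁺) coincides with the set of measures of maximal entropy on X₀⁺. -/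

import Mathlib

open MeasureTheory Filter Topology
open scoped ENNReal Classical

namespace Freezing

/-- The one-sided configuration space `X⁺ = 𝒜^ℕ`. -/
abbrev Cfg1 (A : Type) : Type := ℕ → A

section Defs

variable {A : Type} [Fintype A] [TopologicalSpace A] [DiscreteTopology A]
  [MeasurableSpace A] [BorelSpace A]

/-- The one-sided shift `σ(x)_i = x_{i+1}`. -/
def shift1 (x : Cfg1 A) : Cfg1 A := fun i => x (i + 1)

/-- Shift-invariance of a measure. -/
def Invariant1 (μ : Measure (Cfg1 A)) : Prop := Measure.map shift1 μ = μ

/-- The cylinder set `[w]` of a word `w` of length `n`. -/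
def cyl1 (n : ℕ) (w : Fin n → A) : Set (Cfg1 A) := { x | ∀ i : Fin n, x i = w i }

/-- Measure-theoretic entropy `h(μ) = inf_{n ≥ 1} (1/n) Σ_w (-μ[w] log μ[w])`. -/
noncomputable def entropy1 (μ : Measure (Cfg1 A)) : ℝ :=
  ⨅ n : {n : ℕ // 1 ≤ n},
    (n.1 : ℝ)⁻¹ * ∑ w : Fin n.1 → A, Real.negMulLog (μ (cyl1 n.1 w)).toReal

/-- Pressure `p_φ(β) = sup { h(μ) + β ∫ φ dμ }` over shift-invariant probability measures. -/
noncomputable def pressure1 (φ : Cfg1 A → ℝ) (β : ℝ) : ℝ :=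
  sSup { r | ∃ μ : Measure (Cfg1 A), IsProbabilityMeasure μ ∧ Invariant1 μ ∧
    r = entropy1 μ + β * ∫ x, φ x ∂μ }

/-- The set of equilibrium states of `βφ`. -/
def ES1 (φ : Cfg1 A → ℝ) (β : ℝ) : Set (Measure (Cfg1 A)) :=
  { μ | IsProbabilityMeasure μ ∧ Invariant1 μ ∧
      entropy1 μ + β * ∫ x, φ x ∂μ = pressure1 φ β }

/-- `φ` has a freezing phase transition at `βc`. -/
def FreezingPT1 (φ : Cfg1 A → ℝ) (βc : ℝ) : Prop :=
  (∀ β β' : ℝ, βc < β → βc < β' → ES1 φ β = ES1 φ β') ∧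
  (∀ β β' : ℝ, β < βc → βc < β' → ES1 φ β ≠ ES1 φ β')

/-- The zero-temperature accumulation points of `φ`. -/
def ZTA1 (φ : Cfg1 A → ℝ) : Set (Measure (Cfg1 A)) :=
  { μ | IsProbabilityMeasure μ ∧ Invariant1 μ ∧
      ∃ (β : ℕ → ℝ) (μs : ℕ → Measure (Cfg1 A)),
        Tendsto β atTop atTop ∧ (∀ k, μs k ∈ ES1 φ (β k)) ∧
        ∀ f : Cfg1 A → ℝ, Continuous f →
          Tendsto (fun k => ∫ x, f x ∂(μs k)) atTop (𝓝 (∫ x, f x ∂μ)) }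

/-- A one-sided subshift: nonempty, closed, shift-invariant. -/
def IsSubshift1 (X₀ : Set (Cfg1 A)) : Prop :=
  X₀.Nonempty ∧ IsClosed X₀ ∧ ∀ x ∈ X₀, shift1 x ∈ X₀

/-- The language `L_n(X₀)`: words of length `n` appearing at the origin of points of `X₀`. -/
def lang1 (X₀ : Set (Cfg1 A)) (n : ℕ) : Set (Fin n → A) :=
  { w | ∃ x ∈ X₀, ∀ i : Fin n, x i = w i }

/-- Topological entropy `h_top(X₀) = inf_{n ≥ 1} (1/n) log |L_n(X₀)|`. -/
noncomputable def topEnt1 (X₀ : Set (Cfg1 A)) : ℝ :=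
  ⨅ n : {n : ℕ // 1 ≤ n}, (n.1 : ℝ)⁻¹ * Real.log ((lang1 X₀ n.1).ncard)

/-- A measure of maximal entropy on the subshift `X₀`. -/
def IsMME1 (X₀ : Set (Cfg1 A)) (μ : Measure (Cfg1 A)) : Prop :=
  IsProbabilityMeasure μ ∧ Invariant1 μ ∧ μ X₀ = 1 ∧ entropy1 μ = topEnt1 X₀

/-- The metric `dist(x,y) = 2^{-min{i : x_i ≠ y_i}}`. -/
noncomputable def dist1 (x y : Cfg1 A) : ℝ :=
  if x = y then 0 else (2 : ℝ) ^ (-((sInf { i : ℕ | x i ≠ y i } : ℕ) : ℤ))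

/-- Distance from a point to a subshift. -/
noncomputable def distToSub1 (X₀ : Set (Cfg1 A)) (x : Cfg1 A) : ℝ :=
  sInf { r | ∃ y ∈ X₀, r = dist1 x y }

/-- The (topological) support of a measure: points all of whose open neighbourhoods have
positive measure. -/
def supp1 (μ : Measure (Cfg1 A)) : Set (Cfg1 A) :=
  { x | ∀ U : Set (Cfg1 A), IsOpen U → x ∈ U → 0 < μ U }

end Defs

/-!
Let `Y` be the subshift of finite type and `h` its topological entropy. An orbit that leaves the
language of `Y` after `j` letters visits the depths `j, j - 1, …, 1` on the way, so it pays at least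
`∑_{i ≤ j} a i ≥ log (j + 1)`, and its weight at inverse temperature `β` is at most a power
`(j + 2) ^ (-β c)`. On the other hand `Y` has at most `C (n + 1) ^ D exp (n h)` words of length `n`.
For large `β` the decay beats the polynomial factor, and a renewal inequality, obtained by cutting
orbits at their exits from the language, bounds the `n`-th partition function by twice this number
of words. By Gibbs' inequality the pressure is then at most `h`.

As `φ ≤ 0` vanishes exactly on `Y`, the pressure is nonincreasing and never below `h`. It exceeds
`h` for small `β`, because the full shift has larger entropy than `Y`. So `βc`, the infimum of the
`β` with pressure at most `h`, is positive, and beyond it the equilibrium states are exactly the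
measures of maximal entropy on `Y`. Upper semicontinuity of the entropy identifies the
zero-temperature limits.
-/

section Shift

variable {A : Type}

theorem iterate_shift1_apply (k : ℕ) (x : Cfg1 A) (i : ℕ) : (shift1^[k] x) i = x (i + k) := by
  induction k generalizing x with
  | zero => rfl
  | succ k ih => rw [Function.iterate_succ_apply, ih, shift1, add_assoc]

/-- The union of the cylinders of length `n` that meet `Y`. For a subshift `Y` these are the
points whose prefix of length `n` belongs to the language of `Y`. -/
def cylinderHull (Y : Set (Cfg1 A)) (n : ℕ) : Set (Cfg1 A) :=
  {x | ∃ y ∈ Y, ∀ i < n, y i = x i}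

theorem subset_cylinderHull (Y : Set (Cfg1 A)) (n : ℕ) : Y ⊆ cylinderHull Y n :=
  fun x hx => ⟨x, hx, fun _ _ => rfl⟩

theorem cylinderHull_anti (Y : Set (Cfg1 A)) : Antitone (cylinderHull Y) :=
  fun _ _ hmn _ ⟨y, hy, h⟩ => ⟨y, hy, fun i hi => h i (hi.trans_le hmn)⟩

theorem dependsOn_mem_cylinderHull (Y : Set (Cfg1 A)) (n : ℕ) :
    DependsOn (· ∈ cylinderHull Y n) (Set.Iio n) := fun _ _ h =>
  propext ⟨fun ⟨y, hy, e⟩ => ⟨y, hy, fun i hi => (e i hi).trans (h i hi)⟩,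
    fun ⟨y, hy, e⟩ => ⟨y, hy, fun i hi => (e i hi).trans (h i hi).symm⟩⟩

theorem iterate_shift1_mem_cylinderHull {Y : Set (Cfg1 A)} (hY : Set.MapsTo shift1 Y Y)
    {k n : ℕ} {x : Cfg1 A} (hx : x ∈ cylinderHull Y (k + n)) :
    shift1^[k] x ∈ cylinderHull Y n := by
  obtain ⟨y, hy, h⟩ := hx
  refine ⟨_, hY.iterate k hy, fun i hi => ?_⟩
  rw [iterate_shift1_apply, iterate_shift1_apply, h _ (by omega)]

end Shift

section WordSum

theorem dependsOn_indicator_one {A : Type} {s : Set (Cfg1 A)} {I : Set ℕ}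
    (hs : DependsOn (· ∈ s) I) :
    DependsOn (s.indicator (1 : Cfg1 A → ℝ)) I := fun x y h => by
  have := hs h
  simp only [Set.indicator_apply, Pi.one_apply, this]

variable {A : Type} [Nonempty A]

/-- The extension of a word of length `n` to a point of the full shift by an arbitrary fixed
letter. -/
noncomputable def extend (n : ℕ) (w : Fin n → A) : Cfg1 A :=
  fun i => if h : i < n then w ⟨i, h⟩ else Classical.arbitrary A

theorem extend_of_lt {n : ℕ} (w : Fin n → A) {i : ℕ} (h : i < n) : extend n w i = w ⟨i, h⟩ :=
  dif_pos h

theorem extend_append {l m : ℕ} (u : Fin l → A) (v : Fin m → A) :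
    (∀ i < l, extend (l + m) (Fin.append u v) i = extend l u i) ∧
      shift1^[l] (extend (l + m) (Fin.append u v)) = extend m v := by
  constructor
  · intro i hi
    rw [extend_of_lt _ hi, extend_of_lt _ (by omega)]
    exact Fin.append_left u v ⟨i, hi⟩
  · funext i
    rw [iterate_shift1_apply]
    by_cases hi : i < m
    · rw [extend_of_lt _ hi, extend_of_lt _ (by omega), ← Fin.append_right u v ⟨i, hi⟩]
      congr 1
      ext
      simp [add_comm]
    · simp [extend, hi, add_comm i l]

variable [Fintype A]

/-- The sum of `f` over all words of length `n`, each word being represented by one point. -/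
noncomputable def wordSum (n : ℕ) (f : Cfg1 A → ℝ) : ℝ := ∑ w : Fin n → A, f (extend n w)

theorem wordSum_mono {n : ℕ} {f g : Cfg1 A → ℝ} (h : ∀ x, f x ≤ g x) :
    wordSum n f ≤ wordSum n g :=
  Finset.sum_le_sum fun _ _ => h _

theorem wordSum_add (n : ℕ) (f g : Cfg1 A → ℝ) :
    wordSum n (fun x => f x + g x) = wordSum n f + wordSum n g :=
  Finset.sum_add_distrib

theorem wordSum_sum {ι : Type*} (s : Finset ι) (n : ℕ) (f : ι → Cfg1 A → ℝ) :
    wordSum n (fun x => ∑ i ∈ s, f i x) = ∑ i ∈ s, wordSum n (f i) :=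
  Finset.sum_comm

theorem wordSum_one (n : ℕ) : wordSum n (1 : Cfg1 A → ℝ) = (Fintype.card A : ℝ) ^ n := by
  simp [wordSum]

theorem wordSum_mul_comp_iterate {l m : ℕ} {f : Cfg1 A → ℝ} (hf : DependsOn f (Set.Iio l))
    (g : Cfg1 A → ℝ) :
    wordSum (l + m) (fun x => f x * g (shift1^[l] x)) = wordSum l f * wordSum m g := by
  simp only [wordSum]
  rw [Finset.sum_mul_sum, ← Finset.sum_product', Finset.univ_product_univ]
  refine (Fintype.sum_equiv (Fin.appendEquiv l m) _ _ ?_).symm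
  rintro ⟨u, v⟩
  obtain ⟨hu, hv⟩ := extend_append u v
  change _ = f (extend _ (Fin.append u v)) * g (shift1^[l] (extend _ (Fin.append u v)))
  rw [hv, hf fun i hi => hu i hi]

theorem wordSum_mul_comp_iterate_succ {l m : ℕ} {f : Cfg1 A → ℝ} (hf : DependsOn f (Set.Iio l))
    (g : Cfg1 A → ℝ) :
    wordSum (l + 1 + m) (fun x => f x * g (shift1^[l + 1] x)) =
      Fintype.card A * wordSum l f * wordSum m g := by
  have hfree : wordSum (l + 1) f = wordSum l f * Fintype.card A := by
    simpa [wordSum_one] using wordSum_mul_comp_iterate (m := 1) hf 1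
  rw [wordSum_mul_comp_iterate (hf.mono (Set.Iio_subset_Iio l.le_succ)), hfree]
  ring

/-- The number of words of length `n` whose representative lies in `s`. -/
noncomputable def wordCount (n : ℕ) (s : Set (Cfg1 A)) : ℝ := wordSum n (s.indicator 1)

theorem wordCount_nonneg (n : ℕ) (s : Set (Cfg1 A)) : 0 ≤ wordCount n s :=
  Finset.sum_nonneg fun _ _ => Set.indicator_nonneg (fun _ _ => zero_le_one) _

theorem wordCount_mono {n : ℕ} {s t : Set (Cfg1 A)} (h : s ⊆ t) :
    wordCount n s ≤ wordCount n t :=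
  wordSum_mono fun _ => Set.indicator_le_indicator_of_subset h (fun _ => zero_le_one) _

theorem wordCount_univ (n : ℕ) :
    wordCount n (Set.univ : Set (Cfg1 A)) = (Fintype.card A : ℝ) ^ n := by
  rw [wordCount, Set.indicator_univ, wordSum_one]

theorem wordCount_eq_ncard (n : ℕ) (s : Set (Cfg1 A)) :
    wordCount n s = {w : Fin n → A | extend n w ∈ s}.ncard := by
  simp only [wordCount, wordSum, Set.indicator_apply, Pi.one_apply, Finset.sum_boole]
  rw [← Set.ncard_coe_finset, Finset.coe_filter_univ]

theorem wordCount_biUnion_le {ι : Type*} (n : ℕ) (I : Finset ι) (s : ι → Set (Cfg1 A)) :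
    wordCount n (⋃ i ∈ I, s i) ≤ ∑ i ∈ I, wordCount n (s i) := by
  simp only [wordCount_eq_ncard, Set.mem_iUnion, Set.ofPred_exists]
  exact_mod_cast I.set_ncard_biUnion_le fun i => {w : Fin n → A | extend n w ∈ s i}

theorem wordCount_inter_preimage {l m : ℕ} {s : Set (Cfg1 A)}
    (hs : DependsOn (· ∈ s) (Set.Iio l)) (t : Set (Cfg1 A)) :
    wordCount (l + m) (s ∩ shift1^[l] ⁻¹' t) = wordCount l s * wordCount m t := by
  simp only [wordCount, Set.inter_indicator_one]
  exact wordSum_mul_comp_iterate (dependsOn_indicator_one hs) (t.indicator 1)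

theorem wordCount_inter_preimage_succ {l m : ℕ} {s : Set (Cfg1 A)}
    (hs : DependsOn (· ∈ s) (Set.Iio l)) (t : Set (Cfg1 A)) :
    wordCount (l + 1 + m) (s ∩ shift1^[l + 1] ⁻¹' t) =
      Fintype.card A * wordCount l s * wordCount m t := by
  simp only [wordCount, Set.inter_indicator_one]
  exact wordSum_mul_comp_iterate_succ (dependsOn_indicator_one hs) (t.indicator 1)

end WordSum

section TopologicalEntropy

theorem mem_of_forall_mem_cylinderHull {A : Type} [TopologicalSpace A] [DiscreteTopology A]
    {Y : Set (Cfg1 A)} (hY : IsClosed Y) {x : Cfg1 A} (hx : ∀ n, x ∈ cylinderHull Y n) : x ∈ Y := by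
  by_contra hxY
  obtain ⟨n, hn⟩ := PiNat.exists_disjoint_cylinder hY hxY
  obtain ⟨y, hy, hyx⟩ := hx n
  exact hn.le_bot ⟨hy, hyx⟩

theorem topEnt1_nonneg {A : Type} (Y : Set (Cfg1 A)) : 0 ≤ topEnt1 Y :=
  Real.iInf_nonneg fun _ =>
    mul_nonneg (inv_nonneg.2 (Nat.cast_nonneg _)) (Real.log_natCast_nonneg _)

variable {A : Type} [Fintype A] [Nonempty A]

theorem wordCount_cylinderHull (Y : Set (Cfg1 A)) (n : ℕ) :
    wordCount n (cylinderHull Y n) = (lang1 Y n).ncard := by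
  rw [wordCount_eq_ncard]
  congr 2
  ext w
  refine exists_congr fun y => and_congr_right fun _ => ⟨fun h i => ?_, fun h i hi => ?_⟩
  · rw [h i i.2, extend_of_lt w i.2]
  · rw [extend_of_lt w hi, ← h ⟨i, hi⟩]

theorem one_le_wordCount_cylinderHull {Y : Set (Cfg1 A)} (hne : Y.Nonempty) (n : ℕ) :
    1 ≤ wordCount n (cylinderHull Y n) := by
  obtain ⟨x, hx⟩ := hne
  rw [wordCount_cylinderHull, Nat.one_le_cast, Nat.succ_le_iff, Set.ncard_pos]
  exact ⟨fun i => x i, x, hx, fun _ => rfl⟩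

theorem wordCount_cylinderHull_add_le {Y : Set (Cfg1 A)} (hY : Set.MapsTo shift1 Y Y) (m n : ℕ) :
    wordCount (m + n) (cylinderHull Y (m + n)) ≤
      wordCount m (cylinderHull Y m) * wordCount n (cylinderHull Y n) := by
  rw [← wordCount_inter_preimage (dependsOn_mem_cylinderHull Y m)]
  exact wordCount_mono fun x hx =>
    ⟨cylinderHull_anti Y (m.le_add_right n) hx, iterate_shift1_mem_cylinderHull hY hx⟩

theorem wordCount_zero_le_one (s : Set (Cfg1 A)) : wordCount 0 s ≤ 1 := by
  simpa [wordCount_univ] using wordCount_mono (n := 0) s.subset_univ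

theorem wordCount_cylinderHull_mul_le {Y : Set (Cfg1 A)} (hY : Set.MapsTo shift1 Y Y)
    (m q : ℕ) :
    wordCount (m * q) (cylinderHull Y (m * q)) ≤ wordCount m (cylinderHull Y m) ^ q := by
  induction q with
  | zero => simpa using wordCount_zero_le_one (cylinderHull Y 0)
  | succ q ih =>
    rw [mul_add, mul_one, pow_succ]
    exact (wordCount_cylinderHull_add_le hY _ _).trans
      (mul_le_mul_of_nonneg_right ih (wordCount_nonneg _ _))

theorem le_topEnt1 {Y : Set (Cfg1 A)} {h : ℝ}
    (H : ∀ n, 1 ≤ n → n * h ≤ Real.log (wordCount n (cylinderHull Y n))) : h ≤ topEnt1 Y := by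
  have : Nonempty {n : ℕ // 1 ≤ n} := ⟨⟨1, le_rfl⟩⟩
  refine le_ciInf fun ⟨n, hn⟩ => ?_
  have hn' : (0 : ℝ) < n := by exact_mod_cast hn
  rw [le_inv_mul_iff₀ hn', ← wordCount_cylinderHull]
  exact H n hn

theorem mul_topEnt1_le_log_wordCount (Y : Set (Cfg1 A)) (n : ℕ) :
    n * topEnt1 Y ≤ Real.log (wordCount n (cylinderHull Y n)) := by
  rw [wordCount_cylinderHull]
  rcases Nat.eq_zero_or_pos n with rfl | hn
  · simpa using Real.log_natCast_nonneg _
  have hbdd : BddBelow (Set.range fun m : {m : ℕ // 1 ≤ m} =>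
      (m.1 : ℝ)⁻¹ * Real.log (lang1 Y m.1).ncard) := by
    refine ⟨0, ?_⟩
    rintro _ ⟨m, rfl⟩
    exact mul_nonneg (inv_nonneg.2 (Nat.cast_nonneg _)) (Real.log_natCast_nonneg _)
  rw [← le_inv_mul_iff₀ (Nat.cast_pos.2 hn)]
  exact ciInf_le hbdd ⟨n, hn⟩

theorem log_card_le_topEnt1_univ : Real.log (Fintype.card A) ≤ topEnt1 (.univ : Set (Cfg1 A)) := by
  refine le_topEnt1 fun n _ => ?_
  have huniv : cylinderHull (.univ : Set (Cfg1 A)) n = .univ :=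
    Set.univ_subset_iff.1 (subset_cylinderHull _ n)
  rw [huniv, wordCount_univ, Real.log_pow]

theorem wordCount_lt_card_pow {n : ℕ} {s : Set (Cfg1 A)} (hs : DependsOn (· ∈ s) (Set.Iio n))
    (h : s ≠ .univ) : wordCount n s < (Fintype.card A : ℝ) ^ n := by
  obtain ⟨x, hx⟩ := (Set.ne_univ_iff_exists_notMem s).1 h
  have hmiss : extend n (fun i => x i) ∉ s := fun hmem =>
    hx ((hs fun i hi => extend_of_lt (fun j : Fin n => x j) hi).mp hmem)
  rw [wordCount_eq_ncard]
  have : {w : Fin n → A | extend n w ∈ s}.ncard < (Set.univ : Set (Fin n → A)).ncard :=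
    Set.ncard_lt_ncard ((Set.ssubset_univ_iff).2
      ((Set.ne_univ_iff_exists_notMem _).2 ⟨_, hmiss⟩))
  rw [Set.ncard_univ, Nat.card_eq_fintype_card, Fintype.card_pi_const] at this
  exact_mod_cast this

variable [TopologicalSpace A] [DiscreteTopology A]

theorem topEnt1_lt_log_card {Y : Set (Cfg1 A)} (hY : IsClosed Y) (hne : Y.Nonempty)
    (hproper : Y ≠ .univ) : topEnt1 Y < Real.log (Fintype.card A) := by
  obtain ⟨x, hx⟩ := (Set.ne_univ_iff_exists_notMem Y).1 hproper
  obtain ⟨n, hn⟩ : ∃ n, x ∉ cylinderHull Y n := by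
    by_contra! hall
    exact hx (mem_of_forall_mem_cylinderHull hY hall)
  have hlt := wordCount_lt_card_pow (dependsOn_mem_cylinderHull Y n)
    ((Set.ne_univ_iff_exists_notMem _).2 ⟨x, hn⟩)
  have hlog := Real.log_lt_log
    (zero_lt_one.trans_le (one_le_wordCount_cylinderHull hne n)) hlt
  rw [Real.log_pow] at hlog
  exact lt_of_mul_lt_mul_left ((mul_topEnt1_le_log_wordCount Y n).trans_lt hlog) n.cast_nonneg

end TopologicalEntropy

section OneStepSFT

variable {A : Type}

/-- The one-step subshift of finite type with set of allowed transitions `T`. -/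
def oneStepSFT (T : Set (A × A)) : Set (Cfg1 A) := {x | ∀ i, (x i, x (i + 1)) ∈ T}

theorem isClosed_oneStepSFT [TopologicalSpace A] [DiscreteTopology A] (T : Set (A × A)) :
    IsClosed (oneStepSFT T) := by
  simp only [oneStepSFT, Set.ofPred_forall]
  exact isClosed_iInter fun i => (isClosed_discrete T).preimage (by fun_prop)

theorem mapsTo_shift1_oneStepSFT (T : Set (A × A)) :
    Set.MapsTo shift1 (oneStepSFT T) (oneStepSFT T) :=
  fun _ hx i => hx (i + 1)

theorem exists_glue_mem_oneStepSFT {T : Set (A × A)} {y z : Cfg1 A} {m : ℕ}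
    (hy : y ∈ oneStepSFT T) (hz : z ∈ oneStepSFT T) (h : y m = z 0) :
    ∃ w ∈ oneStepSFT T, (∀ i ≤ m, w i = y i) ∧ ∀ i, w (i + m) = z i := by
  refine ⟨fun i => if i < m then y i else z (i - m), fun i => ?_, fun i hi => ?_, fun i => ?_⟩
  · rcases lt_trichotomy (i + 1) m with hi | hi | hi
    · simpa [hi, i.lt_succ_self.trans hi] using hy i
    · simpa [← hi, ← h] using hy i
    · have hsub : i + 1 - m = i - m + 1 := by omega
      simpa [hi.not_gt, (Nat.lt_succ_iff.1 hi).not_gt, hsub] using hz (i - m)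
  · rcases hi.lt_or_eq with hi | rfl
    · simp [hi]
    · simpa using h.symm
  · simp

/-- The points that agree on their first `m` letters with a point of `Y` reading `s` at times `0`
and `m`. -/
def loops (Y : Set (Cfg1 A)) (s : A) (m : ℕ) : Set (Cfg1 A) :=
  {x | ∃ y ∈ Y, (∀ i < m, y i = x i) ∧ y 0 = s ∧ y m = s}

theorem loops_subset_cylinderHull (Y : Set (Cfg1 A)) (s : A) (m : ℕ) :
    loops Y s m ⊆ cylinderHull Y m :=
  fun _ ⟨y, hy, h, _⟩ => ⟨y, hy, h⟩

theorem dependsOn_mem_loops (Y : Set (Cfg1 A)) (s : A) (m : ℕ) :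
    DependsOn (· ∈ loops Y s m) (Set.Iio m) := fun _ _ h =>
  propext ⟨fun ⟨y, hy, e, hs⟩ => ⟨y, hy, fun i hi => (e i hi).trans (h i hi), hs⟩,
    fun ⟨y, hy, e, hs⟩ => ⟨y, hy, fun i hi => (e i hi).trans (h i hi).symm, hs⟩⟩

theorem inter_preimage_loops_subset (T : Set (A × A)) (s : A) (m n : ℕ) :
    loops (oneStepSFT T) s m ∩ shift1^[m] ⁻¹' loops (oneStepSFT T) s n ⊆
      loops (oneStepSFT T) s (m + n) := by
  rintro x ⟨⟨y, hy, hyx, hy0, hym⟩, z, hz, hzx, hz0, hzn⟩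
  obtain ⟨w, hw, hwy, hwz⟩ := exists_glue_mem_oneStepSFT hy hz (hym.trans hz0.symm)
  refine ⟨w, hw, fun i hi => ?_, (hwy 0 m.zero_le).trans hy0, ?_⟩
  · rcases lt_or_ge i m with him | him
    · rw [hwy i him.le, hyx i him]
    · obtain ⟨k, rfl⟩ := Nat.exists_eq_add_of_le' him
      rw [hwz, hzx k (by omega), iterate_shift1_apply]
  · rw [add_comm, hwz, hzn]

theorem inter_preimage_cylinderHull_subset (T : Set (A × A)) (m n : ℕ) :
    cylinderHull (oneStepSFT T) (m + 1) ∩ shift1^[m] ⁻¹' cylinderHull (oneStepSFT T) (n + 1) ⊆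
      cylinderHull (oneStepSFT T) (m + n + 1) := by
  rintro x ⟨⟨y, hy, hyx⟩, z, hz, hzx⟩
  have hyz : y m = z 0 := by
    rw [hyx m m.lt_succ_self, hzx 0 n.succ_pos, iterate_shift1_apply, zero_add]
  obtain ⟨w, hw, hwy, hwz⟩ := exists_glue_mem_oneStepSFT hy hz hyz
  refine ⟨w, hw, fun i hi => ?_⟩
  rcases lt_or_ge i m with him | him
  · rw [hwy i him.le, hyx i (by omega)]
  · obtain ⟨k, rfl⟩ := Nat.exists_eq_add_of_le' him
    rw [hwz, hzx k (by omega), iterate_shift1_apply]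

/-- The points whose prefix of length `n` belongs to the language of `Y` and uses only letters of
`S`. -/
def restrictedHull (Y : Set (Cfg1 A)) (S : Finset A) (n : ℕ) : Set (Cfg1 A) :=
  {x | x ∈ cylinderHull Y n ∧ ∀ i < n, x i ∈ S}

/-- Cut at the last occurrence of the first letter. -/
theorem restrictedHull_succ_subset {Y : Set (Cfg1 A)} (hY : Set.MapsTo shift1 Y Y)
    (S : Finset A) (n : ℕ) :
    restrictedHull Y S (n + 1) ⊆ ⋃ p ∈ S ×ˢ Finset.range (n + 1),
      loops Y p.1 p.2 ∩ shift1^[p.2 + 1] ⁻¹' restrictedHull Y (S.erase p.1) (n - p.2) := by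
  rintro x ⟨hx, hxS⟩
  set m := Nat.findGreatest (fun i => x i = x 0) n
  have hm : x m = x 0 := Nat.findGreatest_spec (P := fun i => x i = x 0) n.zero_le rfl
  have hmn : m ≤ n := Nat.findGreatest_le n
  have hlast : ∀ i, m < i → i ≤ n → x i ≠ x 0 := fun i hi hin =>
    Nat.findGreatest_is_greatest hi hin
  refine Set.mem_iUnion₂.2 ⟨(x 0, m), ?_, ?_, ?_, fun i hi => ?_⟩
  · exact Finset.mk_mem_product (hxS 0 n.succ_pos) (Finset.mem_range_succ_iff.2 hmn)
  · obtain ⟨y, hy, hyx⟩ := hx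
    exact ⟨y, hy, fun i hi => hyx i (by omega), hyx 0 n.succ_pos, by rw [hyx m (by omega), hm]⟩
  · exact iterate_shift1_mem_cylinderHull hY (by convert hx using 2; dsimp only; omega)
  · rw [iterate_shift1_apply]
    dsimp only at hi ⊢
    exact Finset.mem_erase.2 ⟨hlast _ (by omega) (by omega), hxS _ (by omega)⟩

variable [Fintype A] [Nonempty A]

theorem wordCount_loops_pow_le (T : Set (A × A)) (s : A) (m p : ℕ) (hp : p ≠ 0) :
    wordCount m (loops (oneStepSFT T) s m) ^ p ≤
      wordCount (p * m) (loops (oneStepSFT T) s (p * m)) := by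
  induction p, Nat.one_le_iff_ne_zero.2 hp using Nat.le_induction with
  | base => simp
  | succ p _ ih =>
    rw [pow_succ, add_one_mul]
    calc _ ≤ wordCount (p * m) (loops (oneStepSFT T) s (p * m)) *
            wordCount m (loops (oneStepSFT T) s m) :=
          mul_le_mul_of_nonneg_right (ih (by omega)) (wordCount_nonneg _ _)
      _ = _ := (wordCount_inter_preimage (dependsOn_mem_loops _ s _) _).symm
      _ ≤ _ := wordCount_mono (inter_preimage_loops_subset T s _ _)

/-- Loops can be concatenated freely, so their number has no subexponential correction. -/
theorem wordCount_loops_le (T : Set (A × A)) (s : A) (m : ℕ) :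
    wordCount m (loops (oneStepSFT T) s m) ≤ Real.exp (topEnt1 (oneStepSFT T)) ^ m := by
  set Y := oneStepSFT T
  rcases m.eq_zero_or_pos with rfl | hm
  · simpa using wordCount_zero_le_one (loops Y s 0)
  rcases (wordCount_nonneg m (loops Y s m)).eq_or_lt with h0 | h0
  · rw [← h0]; positivity
  have hm' : (0 : ℝ) < m := by exact_mod_cast hm
  rw [← Real.exp_nat_mul, ← Real.log_le_iff_le_exp h0, ← inv_mul_le_iff₀ hm']
  refine le_topEnt1 fun p hp => ?_
  have hpow : wordCount m (loops Y s m) ^ p ≤ wordCount p (cylinderHull Y p) ^ m :=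
    (wordCount_loops_pow_le T s m p (by omega)).trans <|
      (wordCount_mono (loops_subset_cylinderHull Y s _)).trans
        (wordCount_cylinderHull_mul_le (mapsTo_shift1_oneStepSFT T) p m)
  have hlog := Real.log_le_log (by positivity) hpow
  rw [Real.log_pow, Real.log_pow] at hlog
  rwa [mul_left_comm, inv_mul_le_iff₀ hm']

theorem wordCount_loops_inter_preimage_le (T : Set (A × A)) (s : A) {m n : ℕ} (hmn : m ≤ n)
    {t : Set (Cfg1 A)} {B : ℝ}
    (ht : wordCount (n - m) t ≤ B * Real.exp (topEnt1 (oneStepSFT T)) ^ (n - m)) :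
    wordCount (n + 1) (loops (oneStepSFT T) s m ∩ shift1^[m + 1] ⁻¹' t) ≤
      Fintype.card A * B * Real.exp (topEnt1 (oneStepSFT T)) ^ n := by
  set L := Real.exp (topEnt1 (oneStepSFT T))
  have hlen : n + 1 = m + 1 + (n - m) := by omega
  rw [hlen, wordCount_inter_preimage_succ (dependsOn_mem_loops _ s m)]
  calc _ ≤ Fintype.card A * L ^ m * (B * L ^ (n - m)) := by
        gcongr
        · exact wordCount_nonneg _ _
        · exact wordCount_loops_le T s m
    _ = Fintype.card A * B * L ^ (m + (n - m)) := by ring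
    _ = _ := by rw [Nat.add_sub_cancel' hmn]

theorem wordCount_restrictedHull_le (T : Set (A × A)) (S : Finset A) (n : ℕ) :
    wordCount n (restrictedHull (oneStepSFT T) S n) ≤
      ((Fintype.card A : ℝ) ^ 2 * (n + 1)) ^ S.card * Real.exp (topEnt1 (oneStepSFT T)) ^ n := by
  set L := Real.exp (topEnt1 (oneStepSFT T))
  have hL : 1 ≤ L := Real.one_le_exp (topEnt1_nonneg _)
  have hq : (1 : ℝ) ≤ Fintype.card A := by exact_mod_cast Fintype.card_pos
  induction S using Finset.strongInduction generalizing n with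
  | H S ih =>
  rcases n with _ | n
  · refine (wordCount_zero_le_one _).trans ?_
    simpa using one_le_pow₀ (one_le_pow₀ hq)
  set X : ℝ := (Fintype.card A : ℝ) ^ 2 * ((n + 1 : ℕ) + 1) with hX
  have hpiece : ∀ p ∈ S ×ˢ Finset.range (n + 1),
      wordCount (n + 1) (loops (oneStepSFT T) p.1 p.2 ∩
        shift1^[p.2 + 1] ⁻¹' restrictedHull (oneStepSFT T) (S.erase p.1) (n - p.2)) ≤
      Fintype.card A * X ^ (S.card - 1) * L ^ n := by
    rintro ⟨s, m⟩ hp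
    obtain ⟨hs, hm⟩ := Finset.mem_product.1 hp
    refine wordCount_loops_inter_preimage_le T s (Finset.mem_range_succ_iff.1 hm)
      ((ih (S.erase s) (Finset.erase_ssubset hs) (n - m)).trans ?_)
    rw [Finset.card_erase_of_mem hs, hX]
    gcongr
    omega
  calc _ ≤ _ := wordCount_mono (restrictedHull_succ_subset (mapsTo_shift1_oneStepSFT T) S n)
    _ ≤ _ := wordCount_biUnion_le _ _ _
    _ ≤ _ := Finset.sum_le_card_nsmul _ _ _ hpiece
    _ = S.card * (n + 1) * (Fintype.card A * X ^ (S.card - 1) * L ^ n) := by simp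
    _ ≤ X ^ S.card * L ^ (n + 1) := ?_
  rcases hS : S.card with _ | k
  · simp only [Nat.cast_zero, zero_mul]
    positivity
  have hk : ((k + 1 : ℕ) : ℝ) ≤ Fintype.card A := by exact_mod_cast hS ▸ Finset.card_le_univ S
  calc _ ≤ Fintype.card A * ((n + 1 : ℕ) + 1) * (Fintype.card A * X ^ k * L ^ (n + 1)) := by
        rw [Nat.add_sub_cancel]
        gcongr <;> exact n.le_succ
    _ = _ := by rw [hX]; ring

theorem exists_wordCount_cylinderHull_le (T : Set (A × A)) :
    ∃ (C : ℝ) (D : ℕ), 1 ≤ C ∧ ∀ n : ℕ, wordCount n (cylinderHull (oneStepSFT T) n) ≤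
      C * (n + 1 : ℝ) ^ D * Real.exp (topEnt1 (oneStepSFT T)) ^ n := by
  refine ⟨((Fintype.card A : ℝ) ^ 2) ^ Fintype.card A, Fintype.card A, ?_, fun n => ?_⟩
  · have hA : (1 : ℝ) ≤ Fintype.card A := by exact_mod_cast Fintype.card_pos
    exact one_le_pow₀ (one_le_pow₀ hA)
  · rw [← mul_pow, ← Finset.card_univ]
    refine le_trans (wordCount_mono fun x hx => ?_) (wordCount_restrictedHull_le T Finset.univ n)
    exact ⟨hx, fun i _ => Finset.mem_univ _⟩

end OneStepSFT

section DistPotential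

variable {A : Type}

theorem dist1_eq_zpow {x y : Cfg1 A} {j : ℕ} (h : ∀ i < j, x i = y i) (hj : x j ≠ y j) :
    dist1 x y = (2 : ℝ) ^ (-(j : ℤ)) := by
  have hmin : sInf {i : ℕ | x i ≠ y i} = j :=
    IsLeast.csInf_eq ⟨hj, fun i hi => not_lt.1 fun hlt => hi (h i hlt)⟩
  rw [dist1, if_neg fun hxy => hj (congrFun hxy j), hmin]

theorem exists_dist1_eq_zpow {x y : Cfg1 A} {i : ℕ} (h : x i ≠ y i) :
    ∃ j ≤ i, dist1 x y = (2 : ℝ) ^ (-(j : ℤ)) := by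
  have hex : ∃ i, x i ≠ y i := ⟨i, h⟩
  have hlt : ∀ k < Nat.find hex, x k = y k := fun k hk => not_not.1 (Nat.find_min hex hk)
  exact ⟨Nat.find hex, Nat.find_min' hex h, dist1_eq_zpow hlt (Nat.find_spec hex)⟩

theorem distToSub1_eq_zpow {Y : Set (Cfg1 A)} {x : Cfg1 A} {j : ℕ} (hj : x ∈ cylinderHull Y j)
    (hj' : x ∉ cylinderHull Y (j + 1)) : distToSub1 Y x = (2 : ℝ) ^ (-(j : ℤ)) := by
  have hdiff : ∀ y ∈ Y, ∃ i ≤ j, x i ≠ y i := fun y hy => by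
    by_contra! hall
    exact hj' ⟨y, hy, fun i hi => (hall i (Nat.lt_succ_iff.1 hi)).symm⟩
  refine IsLeast.csInf_eq ⟨?_, ?_⟩
  · obtain ⟨y, hy, hyx⟩ := hj
    obtain ⟨i, hij, hi⟩ := hdiff y hy
    obtain rfl : i = j := hij.antisymm (not_lt.1 fun hlt => hi (hyx i hlt).symm)
    exact ⟨y, hy, (dist1_eq_zpow (fun k hk => (hyx k hk).symm) hi).symm⟩
  · rintro _ ⟨y, hy, rfl⟩
    obtain ⟨i, hij, hi⟩ := hdiff y hy
    obtain ⟨k, hki, hk⟩ := exists_dist1_eq_zpow hi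
    rw [hk]
    exact zpow_le_zpow_right₀ one_le_two (neg_le_neg (by exact_mod_cast hki.trans hij))

/-- The potential `-a j` on the points at distance `2 ^ (-j)` from `Y`, where `j` is the length of
the longest prefix shared with a point of `Y`, and `0` on `Y`. -/
noncomputable def distPotential (Y : Set (Cfg1 A)) (a : ℕ → ℝ) (x : Cfg1 A) : ℝ :=
  if x ∈ Y then 0 else -a (PiNat.longestPrefix x Y)

theorem distPotential_nonpos (Y : Set (Cfg1 A)) {a : ℕ → ℝ} (ha : ∀ j, 0 < a j) (x : Cfg1 A) :
    distPotential Y a x ≤ 0 := by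
  unfold distPotential
  split_ifs
  exacts [le_rfl, neg_nonpos.2 (ha _).le]

theorem distPotential_eq_zero_iff {Y : Set (Cfg1 A)} {a : ℕ → ℝ} (ha : ∀ j, 0 < a j)
    {x : Cfg1 A} : distPotential Y a x = 0 ↔ x ∈ Y := by
  simp [distPotential, (ha _).ne']

variable [TopologicalSpace A] [DiscreteTopology A] {Y : Set (Cfg1 A)} {a : ℕ → ℝ}

theorem mem_cylinderHull_iff_le_longestPrefix (hY : IsClosed Y) (hne : Y.Nonempty) {x : Cfg1 A}
    (hx : x ∉ Y) {n : ℕ} : x ∈ cylinderHull Y n ↔ n ≤ PiNat.longestPrefix x Y := by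
  refine ⟨fun ⟨y, hy, hyx⟩ => not_lt.1 fun hlt => ?_, fun hn => ?_⟩
  · exact (PiNat.disjoint_cylinder_of_longestPrefix_lt hY hx hlt).le_bot ⟨hy, hyx⟩
  · obtain ⟨y, hy, hyx⟩ := PiNat.inter_cylinder_longestPrefix_nonempty hY hne x
    exact ⟨y, hy, fun i hi => hyx i (hi.trans_le hn)⟩

theorem distPotential_eq_neg (hY : IsClosed Y) (hne : Y.Nonempty) {x : Cfg1 A} {j : ℕ}
    (hj : x ∈ cylinderHull Y j) (hj' : x ∉ cylinderHull Y (j + 1)) :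
    distPotential Y a x = -a j := by
  have hx : x ∉ Y := fun hx => hj' (subset_cylinderHull Y _ hx)
  rw [mem_cylinderHull_iff_le_longestPrefix hY hne hx] at hj hj'
  rw [distPotential, if_neg hx, show PiNat.longestPrefix x Y = j by omega]

theorem eq_distPotential (hY : IsClosed Y) (hne : Y.Nonempty) {φ : Cfg1 A → ℝ}
    (hφ0 : ∀ x ∈ Y, φ x = 0)
    (hφ1 : ∀ x ∉ Y, ∀ j : ℕ, distToSub1 Y x = (2 : ℝ) ^ (-(j : ℤ)) → φ x = -(a j)) :
    φ = distPotential Y a := by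
  funext x
  unfold distPotential
  split_ifs with hx
  · exact hφ0 x hx
  · refine hφ1 x hx _ (distToSub1_eq_zpow ?_ ?_) <;>
      simp [mem_cylinderHull_iff_le_longestPrefix hY hne hx]

theorem continuous_distPotential (hY : IsClosed Y) (hne : Y.Nonempty)
    (ha : Tendsto a atTop (𝓝 0)) : Continuous (distPotential Y a) := by
  refine continuous_iff_continuousAt.2 fun x => ?_
  have hcyl : ∀ n, PiNat.cylinder x n ∈ 𝓝 x := fun n =>
    (PiNat.isOpen_cylinder (fun _ => A) x n).mem_nhds (PiNat.self_mem_cylinder x n)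
  by_cases hx : x ∈ Y
  · rw [ContinuousAt, distPotential, if_pos hx, Metric.tendsto_nhds]
    intro ε hε
    obtain ⟨k, hk⟩ := Metric.tendsto_atTop.1 ha ε hε
    filter_upwards [hcyl k] with y hy
    unfold distPotential
    split_ifs with hyY
    · simpa using hε
    · have hky : k ≤ PiNat.longestPrefix y Y :=
        (mem_cylinderHull_iff_le_longestPrefix hY hne hyY).1 ⟨x, hx, fun i hi => (hy i hi).symm⟩
      simpa using hk _ hky
  · refine ContinuousAt.congr continuousAt_const ?_ (f := fun _ => distPotential Y a x)
    filter_upwards [hcyl (PiNat.longestPrefix x Y + 1)] with y hy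
    have hmem : ∀ n ≤ PiNat.longestPrefix x Y + 1, (y ∈ cylinderHull Y n ↔ x ∈ cylinderHull Y n) :=
      fun n hn => (dependsOn_mem_cylinderHull Y n fun i hi => hy i (hi.trans_le hn)).to_iff
    rw [distPotential_eq_neg hY hne ((hmem _ (Nat.le_succ _)).2 ?_) (mt (hmem _ le_rfl).1 ?_),
      distPotential, if_neg hx]
    all_goals simp [mem_cylinderHull_iff_le_longestPrefix hY hne hx]

/-- By gluing, an orbit that leaves the language of a one-step subshift of finite type after `j`
letters visits each of the depths `j, j - 1, …, 1` exactly once. -/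
theorem birkhoffSum_distPotential {T : Set (A × A)} (hne : (oneStepSFT T).Nonempty)
    {j : ℕ} {x : Cfg1 A} (hj : x ∈ cylinderHull (oneStepSFT T) j)
    (hj' : x ∉ cylinderHull (oneStepSFT T) (j + 1)) :
    birkhoffSum shift1 (distPotential (oneStepSFT T) a) j x = -∑ i ∈ Finset.range j, a (i + 1) := by
  have hdepth : ∀ i < j, distPotential (oneStepSFT T) a (shift1^[i] x) = -a (j - 1 - i + 1) := by
    intro i hi
    obtain ⟨d, rfl⟩ := Nat.exists_eq_add_of_lt hi
    rw [show i + d + 1 - 1 - i + 1 = d + 1 by omega]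
    refine distPotential_eq_neg (isClosed_oneStepSFT T) hne
      (iterate_shift1_mem_cylinderHull (mapsTo_shift1_oneStepSFT T) hj) fun hmem => hj' ?_
    exact inter_preimage_cylinderHull_subset T i (d + 1)
      ⟨cylinderHull_anti _ (by omega) hj, hmem⟩
  rw [birkhoffSum, Finset.sum_congr rfl fun i hi => hdepth i (Finset.mem_range.1 hi),
    Finset.sum_neg_distrib, Finset.sum_range_reflect fun i => a (i + 1)]

theorem birkhoffSum_succ_distPotential_le {T : Set (A × A)} (hne : (oneStepSFT T).Nonempty)
    (ha : ∀ j, 0 < a j) {c : ℝ} (hc : 0 < c)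
    (hsum : ∀ j : ℕ, c * Real.log (j + 1) ≤ ∑ i ∈ Finset.range j, a (i + 1))
    {j : ℕ} {x : Cfg1 A} (hj : x ∈ cylinderHull (oneStepSFT T) j)
    (hj' : x ∉ cylinderHull (oneStepSFT T) (j + 1)) :
    birkhoffSum shift1 (distPotential (oneStepSFT T) a) (j + 1) x ≤
      -(min (c / 2) (a 0) * Real.log (j + 2)) := by
  rcases Nat.eq_zero_or_pos j with rfl | hpos
  · have hlog : Real.log 2 ≤ 1 := by linarith [Real.log_le_sub_one_of_pos two_pos]
    rw [zero_add, birkhoffSum_one,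
      distPotential_eq_neg (isClosed_oneStepSFT T) hne hj hj', neg_le_neg_iff]
    simpa using mul_le_mul (min_le_right (c / 2) (a 0)) hlog (Real.log_nonneg one_le_two) (ha 0).le
  · have hlog : Real.log (j + 2) ≤ 2 * Real.log (j + 1) := by
      rw [← Real.log_rpow (by positivity), Real.rpow_two]
      have : (1 : ℝ) ≤ j := by exact_mod_cast hpos
      exact Real.log_le_log (by positivity) (by nlinarith)
    have hlog0 : 0 ≤ Real.log (j + 2) := Real.log_nonneg (by linarith [j.cast_nonneg (α := ℝ)])
    have hmin : min (c / 2) (a 0) * Real.log (j + 2) ≤ c * Real.log (j + 1) :=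
      calc _ ≤ c / 2 * (2 * Real.log (j + 1)) :=
            mul_le_mul (min_le_left _ _) hlog hlog0 (by positivity)
        _ = _ := by ring
    rw [birkhoffSum_succ, birkhoffSum_distPotential hne hj hj']
    linarith [hsum j, distPotential_nonpos (oneStepSFT T) ha (shift1^[j] x)]

end DistPotential

section PartitionFunction

theorem renewal_le_two_mul {u g k κ : ℕ → ℝ} (hk : ∀ j, 0 ≤ k j) (hg : ∀ n, 0 ≤ g n)
    (hu : ∀ n, u n ≤ g n + ∑ j ∈ Finset.range n, k j * u (n - 1 - j))
    (hkg : ∀ n, ∀ j < n, k j * g (n - 1 - j) ≤ κ j * g n)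
    (hκ : ∀ n, ∑ j ∈ Finset.range n, κ j ≤ 1 / 2) (n : ℕ) : u n ≤ 2 * g n := by
  induction n using Nat.strong_induction_on with
  | _ n ih =>
  have hterm : ∀ j ∈ Finset.range n, k j * u (n - 1 - j) ≤ 2 * (κ j * g n) := fun j hj => by
    have hjn := Finset.mem_range.1 hj
    calc _ ≤ k j * (2 * g (n - 1 - j)) := mul_le_mul_of_nonneg_left (ih _ (by omega)) (hk j)
      _ ≤ _ := by linarith [hkg n j hjn]
  calc u n ≤ g n + ∑ j ∈ Finset.range n, 2 * (κ j * g n) :=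
        (hu n).trans (add_le_add_right (Finset.sum_le_sum hterm) _)
    _ = g n + 2 * (∑ j ∈ Finset.range n, κ j) * g n := by
        rw [← Finset.mul_sum, ← Finset.sum_mul, mul_assoc]
    _ ≤ 2 * g n := by nlinarith [mul_le_mul_of_nonneg_right (hκ n) (hg n)]

theorem sum_range_inv_add_two_sq_le (n : ℕ) :
    ∑ j ∈ Finset.range n, ((j + 2 : ℝ) ^ 2)⁻¹ ≤ 1 - ((n : ℝ) + 1)⁻¹ := by
  induction n with
  | zero => simp
  | succ n ih =>
    rw [Finset.sum_range_succ]
    have hstep : ((n + 2 : ℝ) ^ 2)⁻¹ ≤ ((n : ℝ) + 1)⁻¹ - ((n + 1 : ℕ) + 1 : ℝ)⁻¹ := by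
      push_cast
      rw [inv_sub_inv (by positivity) (by positivity), inv_eq_one_div]
      gcongr ?_ / ?_ <;> nlinarith [n.cast_nonneg (α := ℝ)]
    linarith

theorem exists_mul_pow_le_pow (M : ℝ) (D : ℕ) :
    ∃ N : ℕ, ∀ j : ℕ, M * (j + 1 : ℝ) ^ D ≤ (j + 2 : ℝ) ^ N := by
  obtain ⟨t, ht⟩ := pow_unbounded_of_one_lt M one_lt_two
  refine ⟨t + D, fun j => ?_⟩
  rw [pow_add]
  gcongr
  · exact ht.le.trans (by gcongr; simp)
  · norm_num

theorem exp_div_mul_le_inv_pow {c s t : ℝ} (hc : 0 < c) (ht : 0 < t) (hs : s ≤ -(c * Real.log t))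
    (N : ℕ) : Real.exp (N / c * s) ≤ (t ^ N)⁻¹ :=
  calc _ ≤ Real.exp (N / c * -(c * Real.log t)) := by gcongr
    _ = Real.exp (-(N * Real.log t)) := by field_simp
    _ = _ := by rw [Real.exp_neg, Real.exp_nat_mul, Real.exp_log ht]

theorem renewalKernel_le {a C L w : ℝ} {D N j : ℕ} (ha : 0 ≤ a) (hL : 0 ≤ L)
    (hw : w ≤ C * (j + 1 : ℝ) ^ D * L ^ j)
    (hN : 2 * a * C * (j + 1 : ℝ) ^ D ≤ (j + 2 : ℝ) ^ N) :
    a * w * ((j + 2 : ℝ) ^ (N + 2))⁻¹ ≤ 1 / 2 * ((j + 2 : ℝ) ^ 2)⁻¹ * L ^ j :=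
  calc _ ≤ a * (C * (j + 1 : ℝ) ^ D * L ^ j) * ((j + 2 : ℝ) ^ (N + 2))⁻¹ := by gcongr
    _ = 2 * a * C * (j + 1 : ℝ) ^ D / (j + 2 : ℝ) ^ N *
        (1 / 2 * ((j + 2 : ℝ) ^ 2)⁻¹ * L ^ j) := by
      rw [pow_add]
      field_simp
    _ ≤ _ := mul_le_of_le_one_left (by positivity) (div_le_one_of_le₀ hN (by positivity))

variable {A : Type}

theorem exists_mem_cylinderHull_notMem_succ {Y : Set (Cfg1 A)} (hne : Y.Nonempty) {x : Cfg1 A}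
    {n : ℕ} (hx : x ∉ cylinderHull Y n) :
    ∃ j < n, x ∈ cylinderHull Y j ∧ x ∉ cylinderHull Y (j + 1) := by
  induction n with
  | zero => exact absurd ⟨hne.some, hne.some_mem, fun i hi => absurd hi i.not_lt_zero⟩ hx
  | succ n ih =>
    by_cases hn : x ∈ cylinderHull Y n
    · exact ⟨n, n.lt_succ_self, hn, hx⟩
    · obtain ⟨j, hj, h⟩ := ih hn
      exact ⟨j, hj.trans n.lt_succ_self, h⟩

/-- The weight `sup {exp (β S_n φ(y))}`, over all `y` in the cylinder of length `n` around `x`, of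
a word in the partition function of `βφ`. -/
noncomputable def weight (φ : Cfg1 A → ℝ) (β : ℝ) (n : ℕ) (x : Cfg1 A) : ℝ :=
  ⨆ y : PiNat.cylinder x n, Real.exp (β * birkhoffSum shift1 φ n y)

theorem weight_nonneg (φ : Cfg1 A → ℝ) (β : ℝ) (n : ℕ) (x : Cfg1 A) : 0 ≤ weight φ β n x :=
  Real.iSup_nonneg fun _ => (Real.exp_pos _).le

theorem exp_birkhoffSum_le_one {φ : Cfg1 A → ℝ} (hφ : ∀ x, φ x ≤ 0) {β : ℝ} (hβ : 0 ≤ β) (n : ℕ)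
    (x : Cfg1 A) : Real.exp (β * birkhoffSum shift1 φ n x) ≤ 1 :=
  Real.exp_le_one_iff.2 <|
    mul_nonpos_of_nonneg_of_nonpos hβ (Finset.sum_nonpos fun _ _ => hφ _)

theorem exp_birkhoffSum_le_weight {φ : Cfg1 A → ℝ} (hφ : ∀ x, φ x ≤ 0) {β : ℝ} (hβ : 0 ≤ β)
    {n : ℕ} {x y : Cfg1 A} (hy : y ∈ PiNat.cylinder x n) :
    Real.exp (β * birkhoffSum shift1 φ n y) ≤ weight φ β n x :=
  le_ciSup (f := fun y : PiNat.cylinder x n => Real.exp (β * birkhoffSum shift1 φ n y))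
    ⟨1, Set.forall_mem_range.2 fun z => exp_birkhoffSum_le_one hφ hβ n z⟩ ⟨y, hy⟩

/-- Cut an orbit when it first leaves the language of `Y`. -/
theorem weight_le {Y : Set (Cfg1 A)} (hne : Y.Nonempty) {φ : Cfg1 A → ℝ} (hφ : ∀ x, φ x ≤ 0)
    {β : ℝ} (hβ : 0 ≤ β) {r : ℕ → ℝ}
    (hr : ∀ j, ∀ x ∈ cylinderHull Y j, x ∉ cylinderHull Y (j + 1) →
      Real.exp (β * birkhoffSum shift1 φ (j + 1) x) ≤ r j) (hr0 : ∀ j, 0 ≤ r j)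
    (n : ℕ) (x : Cfg1 A) :
    weight φ β n x ≤ (cylinderHull Y n).indicator 1 x + ∑ j ∈ Finset.range n,
      (cylinderHull Y j).indicator 1 x * (r j * weight φ β (n - 1 - j) (shift1^[j + 1] x)) := by
  have hterm : ∀ j ∈ Finset.range n, 0 ≤ (cylinderHull Y j).indicator (1 : Cfg1 A → ℝ) x *
      (r j * weight φ β (n - 1 - j) (shift1^[j + 1] x)) := fun j _ =>
    mul_nonneg (Set.indicator_nonneg (fun _ _ => zero_le_one) x)
      (mul_nonneg (hr0 j) (weight_nonneg φ β _ _))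
  have : Nonempty (PiNat.cylinder x n) := ⟨⟨x, PiNat.self_mem_cylinder x n⟩⟩
  refine ciSup_le fun ⟨y, hy⟩ => ?_
  have hxy : ∀ m ≤ n, (y ∈ cylinderHull Y m ↔ x ∈ cylinderHull Y m) := fun m hm =>
    (dependsOn_mem_cylinderHull Y m fun i hi => hy i (hi.trans_le hm)).to_iff
  by_cases hyn : y ∈ cylinderHull Y n
  · rw [Set.indicator_of_mem ((hxy n le_rfl).1 hyn)]
    exact (exp_birkhoffSum_le_one hφ hβ n y).trans
      (le_add_of_nonneg_right (Finset.sum_nonneg hterm))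
  obtain ⟨j, hjn, hj, hj'⟩ := exists_mem_cylinderHull_notMem_succ hne hyn
  have htail : shift1^[j + 1] y ∈ PiNat.cylinder (shift1^[j + 1] x) (n - 1 - j) := fun i hi => by
    rw [iterate_shift1_apply, iterate_shift1_apply, hy _ (by omega)]
  refine le_trans ?_ (le_add_of_nonneg_of_le (Set.indicator_nonneg (fun _ _ => zero_le_one) x)
    (Finset.single_le_sum hterm (Finset.mem_range.2 hjn)))
  rw [Set.indicator_of_mem ((hxy j hjn.le).1 hj), Pi.one_apply, one_mul]
  calc _ = Real.exp (β * birkhoffSum shift1 φ (j + 1) y) *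
          Real.exp (β * birkhoffSum shift1 φ (n - 1 - j) (shift1^[j + 1] y)) := by
        rw [← Real.exp_add, ← mul_add, ← birkhoffSum_add, show j + 1 + (n - 1 - j) = n by omega]
    _ ≤ _ := mul_le_mul (hr j y hj hj') (exp_birkhoffSum_le_weight hφ hβ htail)
        (Real.exp_pos _).le (hr0 j)

variable [Fintype A] [Nonempty A]

theorem wordSum_weight_le {Y : Set (Cfg1 A)} (hne : Y.Nonempty) {φ : Cfg1 A → ℝ}
    (hφ : ∀ x, φ x ≤ 0) {β : ℝ} (hβ : 0 ≤ β) {r : ℕ → ℝ}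
    (hr : ∀ j, ∀ x ∈ cylinderHull Y j, x ∉ cylinderHull Y (j + 1) →
      Real.exp (β * birkhoffSum shift1 φ (j + 1) x) ≤ r j) (hr0 : ∀ j, 0 ≤ r j) (n : ℕ) :
    wordSum n (weight φ β n) ≤ wordCount n (cylinderHull Y n) + ∑ j ∈ Finset.range n,
      Fintype.card A * wordCount j (cylinderHull Y j) * r j *
        wordSum (n - 1 - j) (weight φ β (n - 1 - j)) := by
  refine (wordSum_mono (weight_le hne hφ hβ hr hr0 n)).trans_eq ?_
  rw [wordSum_add, wordSum_sum, wordCount]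
  congr 1
  refine Finset.sum_congr rfl fun j hj => ?_
  have hlen : n = j + 1 + (n - 1 - j) := by have := Finset.mem_range.1 hj; omega
  have hmul := wordSum_mul_comp_iterate_succ (m := n - 1 - j)
    (dependsOn_indicator_one (dependsOn_mem_cylinderHull Y j))
    fun x => r j * weight φ β (n - 1 - j) x
  rw [← hlen] at hmul
  rw [hmul, wordCount, mul_assoc _ (r j)]
  congr 1
  exact (Finset.mul_sum ..).symm

theorem exists_wordSum_weight_le {Y : Set (Cfg1 A)} (hne : Y.Nonempty) {φ : Cfg1 A → ℝ}
    (hφ : ∀ x, φ x ≤ 0) {c C L : ℝ} {D : ℕ} (hc : 0 < c) (hC : 1 ≤ C) (hL : 1 ≤ L)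
    (hcount : ∀ n, wordCount n (cylinderHull Y n) ≤ C * (n + 1 : ℝ) ^ D * L ^ n)
    (hexit : ∀ j, ∀ x ∈ cylinderHull Y j, x ∉ cylinderHull Y (j + 1) →
      birkhoffSum shift1 φ (j + 1) x ≤ -(c * Real.log (j + 2))) :
    ∃ β : ℝ, 0 < β ∧
      ∀ n, wordSum n (weight φ β n) ≤ 2 * (C * (n + 1 : ℝ) ^ D * L ^ n) := by
  obtain ⟨N, hN⟩ := exists_mul_pow_le_pow (2 * Fintype.card A * C) D
  have hβ : 0 < ((N + 2 : ℕ) : ℝ) / c := by positivity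
  refine ⟨(N + 2 : ℕ) / c, hβ, ?_⟩
  have hkernel : ∀ j : ℕ,
      Fintype.card A * wordCount j (cylinderHull Y j) * ((j + 2 : ℝ) ^ (N + 2))⁻¹ ≤
        1 / 2 * ((j + 2 : ℝ) ^ 2)⁻¹ * L ^ j := fun j =>
    renewalKernel_le (Nat.cast_nonneg _) (by linarith) (hcount j) (hN j)
  refine renewal_le_two_mul (k := fun j => _) (κ := fun j => 1 / 2 * ((j + 2 : ℝ) ^ 2)⁻¹)
    (fun j => mul_nonneg (mul_nonneg (Nat.cast_nonneg _) (wordCount_nonneg _ _)) (by positivity))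
    (fun n => by positivity)
    (fun n => (wordSum_weight_le hne hφ hβ.le
      (fun j x hx hx' => exp_div_mul_le_inv_pow hc (by positivity) (hexit j x hx hx') (N + 2))
      (fun j => by positivity) n).trans (add_le_add_left (hcount n) _))
    (fun n j hj => (mul_le_mul_of_nonneg_right (hkernel j) (by positivity)).trans ?_)
    fun n => ?_
  · have hlen : j + (n - 1 - j) ≤ n := by omega
    calc _ = 1 / 2 * ((j + 2 : ℝ) ^ 2)⁻¹ *
          (C * ((n - 1 - j : ℕ) + 1 : ℝ) ^ D * L ^ (j + (n - 1 - j))) := by rw [pow_add]; ring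
      _ ≤ _ := by gcongr; omega
  · rw [← Finset.mul_sum]
    have := sum_range_inv_add_two_sq_le n
    have : 0 ≤ ((n : ℝ) + 1)⁻¹ := by positivity
    linarith

end PartitionFunction

section Gibbs

variable {ι κ : Type*} [Fintype ι] [Fintype κ]

theorem sum_negMulLog_add_sum_mul_log_le {p w : ι → ℝ} (hp : ∀ i, 0 ≤ p i) (hp1 : ∑ i, p i = 1)
    (hw : ∀ i, 0 ≤ w i) (hpw : ∀ i, w i = 0 → p i = 0) :
    ∑ i, (p i).negMulLog + ∑ i, p i * Real.log (w i) ≤ Real.log (∑ i, w i) := by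
  set Z := ∑ i, w i with hZ
  have hZpos : 0 < Z := by
    obtain ⟨i, -, hi⟩ := Finset.exists_ne_zero_of_sum_ne_zero (hp1.trans_ne one_ne_zero)
    exact Finset.sum_pos' (fun j _ => hw j)
      ⟨i, Finset.mem_univ i, (hw i).lt_of_ne fun h => hi (hpw i h.symm)⟩
  have hterm : ∀ i, (p i).negMulLog + p i * Real.log (w i) ≤
      p i * Real.log Z + (w i / Z - p i) := fun i => by
    rcases (hp i).eq_or_lt with h | h
    · simpa [← h] using div_nonneg (hw i) hZpos.le
    have hwi : 0 < w i := (hw i).lt_of_ne fun h' => h.ne' (hpw i h'.symm)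
    have hlog := Real.log_le_sub_one_of_pos (show 0 < w i / (p i * Z) by positivity)
    rw [Real.log_div hwi.ne' (by positivity), Real.log_mul h.ne' hZpos.ne'] at hlog
    have hmul := mul_le_mul_of_nonneg_left hlog h.le
    rw [show p i * (w i / (p i * Z) - 1) = w i / Z - p i by field_simp] at hmul
    rw [Real.negMulLog]
    linarith
  have hsum := Finset.sum_le_sum fun i (_ : i ∈ Finset.univ) => hterm i
  rw [Finset.sum_add_distrib, Finset.sum_add_distrib, Finset.sum_sub_distrib, ← Finset.sum_mul,
    hp1, ← Finset.sum_div, ← hZ, div_self hZpos.ne'] at hsum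
  linarith

theorem sum_mul_log_fst_marginal (r : ι × κ → ℝ) :
    ∑ x, r x * Real.log (∑ j, r (x.1, j)) = -∑ i, (∑ j, r (i, j)).negMulLog := by
  simp only [Fintype.sum_prod_type, ← Finset.sum_mul, Real.negMulLog, neg_mul,
    Finset.sum_neg_distrib, neg_neg]

theorem sum_mul_log_snd_marginal (r : ι × κ → ℝ) :
    ∑ x, r x * Real.log (∑ i, r (i, x.2)) = -∑ j, (∑ i, r (i, j)).negMulLog := by
  simp only [Fintype.sum_prod_type_right, ← Finset.sum_mul, Real.negMulLog, neg_mul,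
    Finset.sum_neg_distrib, neg_neg]

theorem sum_negMulLog_le_add_marginals {r : ι × κ → ℝ} (hr : ∀ x, 0 ≤ r x) (hr1 : ∑ x, r x = 1) :
    ∑ x, (r x).negMulLog ≤
      ∑ i, (∑ j, r (i, j)).negMulLog + ∑ j, (∑ i, r (i, j)).negMulLog := by
  set p : ι → ℝ := fun i => ∑ j, r (i, j)
  set q : κ → ℝ := fun j => ∑ i, r (i, j)
  have hrp : ∀ x : ι × κ, p x.1 = 0 → r x = 0 := fun x h =>
    (Finset.sum_eq_zero_iff_of_nonneg fun j _ => hr (x.1, j)).1 h x.2 (Finset.mem_univ _)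
  have hrq : ∀ x : ι × κ, q x.2 = 0 → r x = 0 := fun x h =>
    (Finset.sum_eq_zero_iff_of_nonneg fun i _ => hr (i, x.2)).1 h x.1 (Finset.mem_univ _)
  have hpq : ∑ x : ι × κ, p x.1 * q x.2 = 1 := by
    have hp : ∑ i, p i = 1 := (Fintype.sum_prod_type r).symm.trans hr1
    have hq : ∑ j, q j = 1 := (Fintype.sum_prod_type_right r).symm.trans hr1
    rw [Fintype.sum_prod_type]
    simp only [← Finset.mul_sum, hq, mul_one, hp]
  have hgibbs := sum_negMulLog_add_sum_mul_log_le (w := fun x => p x.1 * q x.2) hr hr1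
    (fun x => mul_nonneg (Finset.sum_nonneg fun _ _ => hr _) (Finset.sum_nonneg fun _ _ => hr _))
    fun x h => (mul_eq_zero.1 h).elim (hrp x) (hrq x)
  have hlog : ∀ x : ι × κ, r x * Real.log (p x.1 * q x.2) =
      r x * Real.log (p x.1) + r x * Real.log (q x.2) := fun x => by
    by_cases hx : r x = 0
    · simp [hx]
    · rw [Real.log_mul (mt (hrp x) hx) (mt (hrq x) hx), mul_add]
  rw [hpq, Real.log_one] at hgibbs
  simp only [hlog] at hgibbs
  rw [Finset.sum_add_distrib, sum_mul_log_fst_marginal, sum_mul_log_snd_marginal] at hgibbs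
  linarith

theorem sum_measureReal_inter_preimage_singleton {α : Type*} [MeasurableSpace α]
    [MeasurableSpace ι] [MeasurableSingletonClass ι] {μ : Measure α} [IsFiniteMeasure μ]
    {f : α → ι} (hf : Measurable f) (s : Set α) :
    ∑ i, μ.real (s ∩ f ⁻¹' {i}) = μ.real s := by
  have hfib : ∀ i, MeasurableSet (f ⁻¹' {i}) := fun i => hf (MeasurableSet.singleton i)
  have h := measureReal_biUnion_finset (μ := μ.restrict s) (s := Finset.univ)
    (fun i _ j _ hij => Disjoint.preimage f (Set.disjoint_singleton.2 hij)) fun i _ => hfib i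
  simp only [Finset.mem_univ, Set.iUnion_true, ← Set.preimage_iUnion,
    Set.iUnion_of_singleton, Set.preimage_univ,
    measureReal_restrict_apply_univ] at h
  simp only [h, Set.inter_comm s, measureReal_restrict_apply (hfib _)]

end Gibbs

section BlockEntropy

variable {A : Type}

/-- The first `n` letters of a point. -/
def prefixWord (n : ℕ) (x : Cfg1 A) : Fin n → A := fun i => x i

theorem cyl1_eq_preimage (n : ℕ) (w : Fin n → A) : cyl1 n w = prefixWord n ⁻¹' {w} :=
  Set.ext fun _ => funext_iff.symm

theorem cyl1_append {n m : ℕ} (u : Fin n → A) (v : Fin m → A) :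
    cyl1 (n + m) (Fin.append u v) = cyl1 n u ∩ shift1^[n] ⁻¹' cyl1 m v := by
  ext x
  simp only [Set.mem_inter_iff, Set.mem_preimage, cyl1, Set.mem_ofPred_eq, iterate_shift1_apply,
    Fin.forall_fin_add, Fin.append_left, Fin.append_right, Fin.val_castAdd, Fin.val_natAdd,
    add_comm n]

variable [MeasurableSpace A]

theorem measurable_shift1 : Measurable (shift1 : Cfg1 A → Cfg1 A) :=
  measurable_pi_lambda _ fun _ => measurable_pi_apply _

theorem measurable_prefixWord (n : ℕ) : Measurable (prefixWord n : Cfg1 A → _) :=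
  measurable_pi_lambda _ fun _ => measurable_pi_apply _

theorem isProbabilityMeasure_map_iterate_shift1 (μ : Measure (Cfg1 A)) [IsProbabilityMeasure μ]
    (k : ℕ) : IsProbabilityMeasure (μ.map shift1^[k]) :=
  Measure.isProbabilityMeasure_map (measurable_shift1.iterate k).aemeasurable

theorem measurableSet_cyl1 [MeasurableSingletonClass A] (n : ℕ) (w : Fin n → A) :
    MeasurableSet (cyl1 n w) := by
  rw [cyl1_eq_preimage]
  exact measurable_prefixWord n (MeasurableSet.singleton w)

variable [Fintype A]

/-- The Shannon entropy of the distribution of the first `n` letters. -/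
noncomputable def blockEntropy (n : ℕ) (μ : Measure (Cfg1 A)) : ℝ :=
  ∑ w : Fin n → A, (μ.real (cyl1 n w)).negMulLog

theorem blockEntropy_nonneg (n : ℕ) (μ : Measure (Cfg1 A)) [IsProbabilityMeasure μ] :
    0 ≤ blockEntropy n μ :=
  Finset.sum_nonneg fun _ _ => Real.negMulLog_nonneg measureReal_nonneg measureReal_le_one

theorem mul_entropy1_le_blockEntropy (n : ℕ) (μ : Measure (Cfg1 A)) [IsProbabilityMeasure μ] :
    n * entropy1 μ ≤ blockEntropy n μ := by
  rcases n.eq_zero_or_pos with rfl | hn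
  · simpa using blockEntropy_nonneg 0 μ
  rw [← le_inv_mul_iff₀ (by positivity)]
  exact ciInf_le (f := fun n : {n : ℕ // 1 ≤ n} => (n.1 : ℝ)⁻¹ * blockEntropy n.1 μ)
    ⟨0, Set.forall_mem_range.2 fun m => mul_nonneg (by positivity) (blockEntropy_nonneg _ μ)⟩
    ⟨n, hn⟩

theorem le_entropy1 {h : ℝ} {μ : Measure (Cfg1 A)}
    (H : ∀ n : ℕ, 1 ≤ n → n * h ≤ blockEntropy n μ) : h ≤ entropy1 μ := by
  have : Nonempty {n : ℕ // 1 ≤ n} := ⟨⟨1, le_rfl⟩⟩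
  refine le_ciInf fun ⟨n, hn⟩ => ?_
  rw [le_inv_mul_iff₀ (by positivity)]
  exact H n hn

variable [MeasurableSingletonClass A]

theorem sum_measureReal_cyl1 (n : ℕ) (μ : Measure (Cfg1 A)) [IsProbabilityMeasure μ] :
    ∑ w, μ.real (cyl1 n w) = 1 := by
  simpa [cyl1_eq_preimage] using
    sum_measureReal_inter_preimage_singleton (μ := μ) (measurable_prefixWord n) Set.univ

theorem integral_comp_prefixWord (n : ℕ) (c : (Fin n → A) → ℝ) (μ : Measure (Cfg1 A))
    [IsFiniteMeasure μ] : ∫ x, c (prefixWord n x) ∂μ = ∑ w, μ.real (cyl1 n w) * c w := by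
  rw [← integral_map (measurable_prefixWord n).aemeasurable
    (measurable_of_finite c).aestronglyMeasurable, integral_fintype .of_finite]
  simp only [cyl1_eq_preimage, smul_eq_mul,
    map_measureReal_apply (measurable_prefixWord n) (MeasurableSet.singleton _)]

theorem log_le_blockEntropy {n : ℕ} {K : ℝ} {μ : Measure (Cfg1 A)} [IsProbabilityMeasure μ]
    (h : ∀ w, μ.real (cyl1 n w) ≤ K⁻¹) : Real.log K ≤ blockEntropy n μ :=
  calc Real.log K = ∑ w, μ.real (cyl1 n w) * Real.log K := by
        rw [← Finset.sum_mul, sum_measureReal_cyl1, one_mul]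
    _ ≤ blockEntropy n μ := Finset.sum_le_sum fun w _ => by
        rcases (measureReal_nonneg (μ := μ) (s := cyl1 n w)).eq_or_lt with h0 | h0
        · simp [← h0]
        · have hlog := Real.log_le_log h0 (h w)
          rw [Real.log_inv] at hlog
          rw [Real.negMulLog, neg_mul_comm]
          gcongr
          linarith

theorem blockEntropy_add_le (n m : ℕ) (μ : Measure (Cfg1 A)) [IsProbabilityMeasure μ] :
    blockEntropy (n + m) μ ≤ blockEntropy n μ + blockEntropy m (μ.map shift1^[n]) := by
  have hshift := measurable_shift1 (A := A).iterate n
  set r : (Fin n → A) × (Fin m → A) → ℝ := fun x => μ.real (cyl1 (n + m) (Fin.append x.1 x.2))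
  have hfst : ∀ u, ∑ v, r (u, v) = μ.real (cyl1 n u) := fun u => by
    simpa only [r, cyl1_append, cyl1_eq_preimage m, ← Set.preimage_comp] using
      sum_measureReal_inter_preimage_singleton ((measurable_prefixWord m).comp hshift) _
  have hsnd : ∀ v, ∑ u, r (u, v) = (μ.map shift1^[n]).real (cyl1 m v) := fun v => by
    rw [map_measureReal_apply hshift (measurableSet_cyl1 m v)]
    simpa only [r, cyl1_append, cyl1_eq_preimage n, Set.inter_comm (prefixWord n ⁻¹' _)] using
      sum_measureReal_inter_preimage_singleton (measurable_prefixWord n) _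
  have hblock : blockEntropy (n + m) μ = ∑ x, (r x).negMulLog :=
    (Fintype.sum_equiv (Fin.appendEquiv n m) _ _ fun _ => rfl).symm
  have hr1 : ∑ x, r x = 1 := by
    rw [Fintype.sum_prod_type]
    simp only [hfst, sum_measureReal_cyl1]
  have hmarg := sum_negMulLog_le_add_marginals (r := r) (fun x => measureReal_nonneg) hr1
  simp only [hfst, hsnd] at hmarg
  exact hblock.trans_le hmarg

variable [Nonempty A]

theorem blockEntropy_add_integral_le {n : ℕ} {μ : Measure (Cfg1 A)} [IsProbabilityMeasure μ]
    {f g : Cfg1 A → ℝ} (hf : Integrable f μ)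
    (hfg : ∀ x, ∀ y ∈ PiNat.cylinder x n, Real.exp (f y) ≤ g x) :
    blockEntropy n μ + ∫ x, f x ∂μ ≤ Real.log (wordSum n g) := by
  have hg : ∀ x, 0 < g x := fun x =>
    (Real.exp_pos _).trans_le (hfg x x (PiNat.self_mem_cylinder x n))
  set c : (Fin n → A) → ℝ := fun w => Real.log (g (extend n w))
  have hfc : ∀ x, f x ≤ c (prefixWord n x) := fun x =>
    (Real.le_log_iff_exp_le (hg _)).2
      (hfg _ _ fun i hi => (extend_of_lt (prefixWord n x) hi).symm)
  have hint : ∫ x, f x ∂μ ≤ ∑ w, μ.real (cyl1 n w) * c w := by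
    rw [← integral_comp_prefixWord]
    exact integral_mono hf
      ((Integrable.of_finite (f := c)).comp_measurable (measurable_prefixWord n)) hfc
  have hgibbs := sum_negMulLog_add_sum_mul_log_le (p := fun w => μ.real (cyl1 n w))
    (w := fun w => g (extend n w)) (fun _ => measureReal_nonneg) (sum_measureReal_cyl1 n μ)
    (fun w => (hg _).le) fun w h => absurd h (hg _).ne'
  exact (add_le_add_right hint _).trans hgibbs

theorem blockEntropy_le_mul_log_card (n : ℕ) (μ : Measure (Cfg1 A)) [IsProbabilityMeasure μ] :
    blockEntropy n μ ≤ n * Real.log (Fintype.card A) := by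
  simpa [wordSum_one] using
    blockEntropy_add_integral_le (n := n) (μ := μ) (f := 0) (g := 1) (integrable_const 0) (by simp)

theorem blockEntropy_add_mul_le (r m q : ℕ) (μ : Measure (Cfg1 A)) [IsProbabilityMeasure μ] :
    blockEntropy (r + m * q) μ ≤ r * Real.log (Fintype.card A) +
      ∑ k ∈ Finset.range q, blockEntropy m (μ.map shift1^[r + m * k]) := by
  induction q with
  | zero => simpa using blockEntropy_le_mul_log_card r μ
  | succ q ih =>
    rw [Finset.sum_range_succ, ← add_assoc, mul_add_one, ← add_assoc]
    exact (blockEntropy_add_le (r + m * q) m μ).trans (add_le_add_left ih _)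

end BlockEntropy

section UniformAverage

variable {ι α : Type*} [MeasurableSpace α]

/-- The arithmetic mean of the measures `ν i`, `i ∈ s`. -/
noncomputable def uniformAverage (s : Finset ι) (ν : ι → Measure α) : Measure α :=
  (s.card : ℝ≥0∞)⁻¹ • ∑ i ∈ s, ν i

variable {s : Finset ι} {ν : ι → Measure α}

theorem isProbabilityMeasure_uniformAverage (hs : s.Nonempty)
    (hν : ∀ i, IsProbabilityMeasure (ν i)) : IsProbabilityMeasure (uniformAverage s ν) := by
  constructor
  simp only [uniformAverage, Measure.smul_apply, Measure.coe_finsetSum, Finset.sum_apply,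
    measure_univ, Finset.sum_const, smul_eq_mul, nsmul_eq_mul, mul_one]
  exact ENNReal.inv_mul_cancel (by simpa using hs.ne_empty) (ENNReal.natCast_ne_top _)

theorem measureReal_uniformAverage (hν : ∀ i, IsFiniteMeasure (ν i)) (t : Set α) :
    (uniformAverage s ν).real t = (s.card : ℝ)⁻¹ * ∑ i ∈ s, (ν i).real t := by
  rw [uniformAverage, measureReal_ennreal_smul_apply, measureReal_def (∑ i ∈ s, ν i),
    Measure.coe_finsetSum, Finset.sum_apply, ENNReal.toReal_sum fun i _ => measure_ne_top _ _]
  simp [measureReal_def]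

theorem measureReal_uniformAverage_eq_one (hs : s.Nonempty) (hν : ∀ i, IsFiniteMeasure (ν i))
    {t : Set α} (ht : ∀ i ∈ s, (ν i).real t = 1) : (uniformAverage s ν).real t = 1 := by
  rw [measureReal_uniformAverage hν, Finset.sum_congr rfl ht, Finset.sum_const, nsmul_one,
    inv_mul_cancel₀ (by exact_mod_cast hs.card_ne_zero)]

theorem integral_uniformAverage {f : α → ℝ} (hf : ∀ i ∈ s, Integrable f (ν i)) :
    ∫ x, f x ∂uniformAverage s ν = (s.card : ℝ)⁻¹ * ∑ i ∈ s, ∫ x, f x ∂ν i := by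
  rw [uniformAverage, integral_smul_measure, integral_finsetSum_measure hf]
  simp

theorem sum_blockEntropy_le_card_mul {A : Type} [MeasurableSpace A] [Fintype A]
    (hs : s.Nonempty) {ν : ι → Measure (Cfg1 A)} (hν : ∀ i, IsFiniteMeasure (ν i)) (n : ℕ) :
    ∑ i ∈ s, blockEntropy n (ν i) ≤ s.card * blockEntropy n (uniformAverage s ν) := by
  have hcard : (0 : ℝ) < s.card := by exact_mod_cast hs.card_pos
  simp only [blockEntropy]
  rw [Finset.sum_comm, Finset.mul_sum]
  refine Finset.sum_le_sum fun w _ => ?_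
  have hjensen := Real.concaveOn_negMulLog.le_map_sum (t := s) (w := fun _ => (s.card : ℝ)⁻¹)
    (p := fun i => (ν i).real (cyl1 n w)) (fun _ _ => by positivity) (by simp [hcard.ne'])
    fun i _ => measureReal_nonneg
  rw [measureReal_uniformAverage hν, ← inv_mul_le_iff₀ hcard]
  simpa only [smul_eq_mul, ← Finset.mul_sum] using hjensen

end UniformAverage

section VariationalPrinciple

variable {A : Type} [MeasurableSpace A]

/-- The empirical average `N⁻¹ ∑_{i<N} σⁱ_* ν`. -/
noncomputable def shiftAverage (N : ℕ) (ν : Measure (Cfg1 A)) : Measure (Cfg1 A) :=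
  uniformAverage (Finset.range N) fun i => ν.map shift1^[i]

theorem isProbabilityMeasure_shiftAverage {N : ℕ} (hN : N ≠ 0) (ν : Measure (Cfg1 A))
    [IsProbabilityMeasure ν] : IsProbabilityMeasure (shiftAverage N ν) :=
  isProbabilityMeasure_uniformAverage (Finset.nonempty_range_iff.2 hN)
    (isProbabilityMeasure_map_iterate_shift1 ν)

theorem sum_range_sum_range_add_mul (f : ℕ → ℝ) (m q : ℕ) :
    ∑ r ∈ Finset.range m, ∑ k ∈ Finset.range q, f (r + m * k) =
      ∑ i ∈ Finset.range (m * q), f i := by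
  rw [Finset.sum_comm]
  induction q with
  | zero => simp
  | succ q ih =>
    rw [Finset.sum_range_succ, ih, mul_add_one, Finset.sum_range_add]
    simp only [add_comm]

theorem abs_integral_comp_shift1_sub_le {N : ℕ} {ν : Measure (Cfg1 A)} [IsProbabilityMeasure ν]
    {f : Cfg1 A → ℝ} (hf : Measurable f) {M : ℝ} (hM : ∀ x, |f x| ≤ M) :
    |∫ x, f (shift1 x) ∂shiftAverage N ν - ∫ x, f x ∂shiftAverage N ν| ≤
      (N : ℝ)⁻¹ * (2 * M) := by
  have := isProbabilityMeasure_map_iterate_shift1 ν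
  have hint : ∀ g : Cfg1 A → ℝ, Measurable g → (∀ x, |g x| ≤ M) →
      ∫ x, g x ∂shiftAverage N ν = (N : ℝ)⁻¹ * ∑ i ∈ Finset.range N, ∫ x, g (shift1^[i] x) ∂ν :=
    fun g hg hgM => by
    rw [shiftAverage, integral_uniformAverage fun i _ =>
      .of_bound hg.aestronglyMeasurable M (ae_of_all _ hgM), Finset.card_range]
    simp only [integral_map (measurable_shift1.iterate _).aemeasurable hg.aestronglyMeasurable]
  have hbound : ∀ i, |∫ x, f (shift1^[i] x) ∂ν| ≤ M := fun i => by
    simpa using norm_integral_le_of_norm_le_const (μ := ν) (f := fun x => f (shift1^[i] x))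
      (ae_of_all _ fun x => hM _)
  rw [hint f hf hM, hint (fun x => f (shift1 x)) (hf.comp measurable_shift1) fun x => hM _,
    ← mul_sub, ← Finset.sum_sub_distrib]
  simp only [← Function.iterate_succ_apply' shift1]
  rw [Finset.sum_range_sub fun i => ∫ x, f (shift1^[i] x) ∂ν, abs_mul, abs_inv, Nat.abs_cast]
  gcongr
  linarith [abs_sub (∫ x, f (shift1^[N] x) ∂ν) (∫ x, f (shift1^[0] x) ∂ν), hbound N, hbound 0]

theorem measureReal_shiftAverage_eq_one {Y : Set (Cfg1 A)} (hY : MeasurableSet Y)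
    (hYinv : Set.MapsTo shift1 Y Y) {N : ℕ} (hN : N ≠ 0) {ν : Measure (Cfg1 A)}
    [IsProbabilityMeasure ν] (hν : ν.real Y = 1) : (shiftAverage N ν).real Y = 1 := by
  have := isProbabilityMeasure_map_iterate_shift1 ν
  refine measureReal_uniformAverage_eq_one (Finset.nonempty_range_iff.2 hN) inferInstance
    fun i _ => measureReal_le_one.antisymm ?_
  rw [map_measureReal_apply (measurable_shift1.iterate i) hY, ← hν]
  exact measureReal_mono (hYinv.iterate i)

variable [Fintype A] [MeasurableSingletonClass A] [Nonempty A]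

theorem le_blockEntropy_shiftAverage {h : ℝ} {m q : ℕ} (hmq : m * q ≠ 0) {ν : Measure (Cfg1 A)}
    [IsProbabilityMeasure ν] (hν : ∀ n, m * q ≤ n → (m * q : ℕ) * h ≤ blockEntropy n ν) :
    m * h ≤ ((m * q : ℕ) : ℝ)⁻¹ * (m * (m * Real.log (Fintype.card A))) +
      blockEntropy m (shiftAverage (m * q) ν) := by
  have := isProbabilityMeasure_map_iterate_shift1 ν
  have : 0 ≤ Real.log (Fintype.card A) := Real.log_natCast_nonneg _
  have hshifted : ∀ r ∈ Finset.range m, (m * q : ℕ) * h ≤ m * Real.log (Fintype.card A) +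
      ∑ k ∈ Finset.range q, blockEntropy m (ν.map shift1^[r + m * k]) := fun r hr =>
    calc _ ≤ blockEntropy (r + m * q) ν := hν _ (by omega)
      _ ≤ _ := blockEntropy_add_mul_le r m q ν
      _ ≤ _ := by gcongr; exact (Finset.mem_range.1 hr).le
  have hsum := Finset.sum_le_sum hshifted
  rw [Finset.sum_add_distrib,
    sum_range_sum_range_add_mul fun i => blockEntropy m (ν.map shift1^[i])] at hsum
  have hconcave := sum_blockEntropy_le_card_mul (Finset.nonempty_range_iff.2 hmq)
    (ν := fun i => ν.map shift1^[i]) inferInstance m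
  simp only [Finset.sum_const, Finset.card_range, nsmul_eq_mul] at hsum hconcave
  calc m * h = ((m * q : ℕ) : ℝ)⁻¹ * (m * ((m * q : ℕ) * h)) := by field_simp
    _ ≤ ((m * q : ℕ) : ℝ)⁻¹ * (m * (m * Real.log (Fintype.card A)) +
        (m * q : ℕ) * blockEntropy m (shiftAverage (m * q) ν)) := by
      gcongr
      exact hsum.trans (add_le_add_right hconcave _)
    _ = _ := by field_simp

theorem exists_measure_mul_topEnt1_le_blockEntropy {Y : Set (Cfg1 A)} (hY : MeasurableSet Y)
    (hne : Y.Nonempty) (N : ℕ) :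
    ∃ ν : Measure (Cfg1 A), IsProbabilityMeasure ν ∧ ν.real Y = 1 ∧
      ∀ n, N ≤ n → N * topEnt1 Y ≤ blockEntropy n ν := by
  choose pt hptY hpt using fun w : lang1 Y N => w.2
  have : Nonempty (lang1 Y N) := ⟨⟨prefixWord N hne.some, _, hne.some_mem, fun _ => rfl⟩⟩
  have hprob : ∀ w, IsProbabilityMeasure (Measure.dirac (pt w)) := fun _ => inferInstance
  set ν := uniformAverage Finset.univ fun w => Measure.dirac (pt w)
  have hν : IsProbabilityMeasure ν := isProbabilityMeasure_uniformAverage Finset.univ_nonempty hprob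
  refine ⟨ν, hν, measureReal_uniformAverage_eq_one Finset.univ_nonempty inferInstance
    fun w _ => by simp [measureReal_def, Measure.dirac_apply' _ hY, hptY], fun n hn => ?_⟩
  refine (mul_topEnt1_le_log_wordCount Y N).trans (log_le_blockEntropy fun w => ?_)
  have hcard : ((Finset.univ : Finset (lang1 Y N)).card : ℝ) = wordCount N (cylinderHull Y N) := by
    rw [wordCount_cylinderHull, Set.ncard_eq_toFinset_card', Finset.card_univ, Set.toFinset_card]
  have hinj : ∀ v, pt v ∈ cyl1 n w → v.1 = fun i => w (Fin.castLE hn i) := fun v hv =>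
    funext fun i => (hpt v i).symm.trans (hv (Fin.castLE hn i))
  rw [measureReal_uniformAverage inferInstance, hcard]
  refine mul_le_of_le_one_right (inv_nonneg.2 (wordCount_nonneg _ _)) ?_
  have hdirac : ∀ v, (Measure.dirac (pt v)).real (cyl1 n w) = if pt v ∈ cyl1 n w then 1 else 0 :=
    fun v => by
    simp [measureReal_def, Measure.dirac_apply' _ (measurableSet_cyl1 n w), Set.indicator_apply,
      apply_ite]
  simp only [hdirac, Finset.sum_boole]
  exact_mod_cast Finset.card_le_one.2 fun v hv v' hv' => Subtype.ext <|
    (hinj v (Finset.mem_filter.1 hv).2).trans (hinj v' (Finset.mem_filter.1 hv').2).symm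

end VariationalPrinciple

section WeakLimit

theorem continuous_shift1 {A : Type} [TopologicalSpace A] :
    Continuous (shift1 : Cfg1 A → Cfg1 A) :=
  continuous_pi fun _ => continuous_apply _

variable {A : Type} [TopologicalSpace A] [DiscreteTopology A] [MeasurableSpace A] [BorelSpace A]

variable {ι : Type*} {l : Filter ι} {μs : ι → Measure (Cfg1 A)} {μ : Measure (Cfg1 A)}

theorem invariant1_of_tendsto [Finite A] [l.NeBot] [IsProbabilityMeasure μ]
    (hlim : ∀ f : Cfg1 A → ℝ, Continuous f →
      Tendsto (fun i => ∫ x, f x ∂μs i) l (𝓝 (∫ x, f x ∂μ)))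
    (hinv : ∀ f : Cfg1 A → ℝ, Continuous f →
      Tendsto (fun i => ∫ x, f (shift1 x) ∂μs i - ∫ x, f x ∂μs i) l (𝓝 0)) :
    Invariant1 μ := by
  have := isProbabilityMeasure_map_iterate_shift1 μ 1
  rw [Function.iterate_one] at this
  refine ext_of_forall_integral_eq_of_IsFiniteMeasure fun f => ?_
  rw [integral_map measurable_shift1.aemeasurable f.continuous.aestronglyMeasurable]
  exact sub_eq_zero.1 <| tendsto_nhds_unique
    ((hlim _ (f.continuous.comp continuous_shift1)).sub (hlim _ f.continuous))
    (hinv f f.continuous)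

theorem measure_eq_one_of_tendsto [Finite A] [l.NeBot] {P : ι → ProbabilityMeasure (Cfg1 A)}
    {μ : ProbabilityMeasure (Cfg1 A)} (hlim : Tendsto P l (𝓝 μ)) {Y : Set (Cfg1 A)}
    (hY : IsClosed Y) (hPY : ∀ i, (P i : Measure (Cfg1 A)).real Y = 1) :
    (μ : Measure (Cfg1 A)) Y = 1 := by
  have hPY' : ∀ i, (P i : Measure (Cfg1 A)) Y = 1 := fun i =>
    (ENNReal.toReal_eq_one_iff _).1 (hPY i)
  refine prob_le_one.antisymm ?_
  simpa only [hPY', limsup_const] using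
    ProbabilityMeasure.limsup_measure_closed_le_of_tendsto hlim hY

variable [Fintype A]

theorem tendsto_blockEntropy
    (hlim : ∀ f : Cfg1 A → ℝ, Continuous f →
      Tendsto (fun i => ∫ x, f x ∂μs i) l (𝓝 (∫ x, f x ∂μ))) (n : ℕ) :
    Tendsto (fun i => blockEntropy n (μs i)) l (𝓝 (blockEntropy n μ)) := by
  refine tendsto_finsetSum _ fun w _ => (Real.continuous_negMulLog.tendsto _).comp ?_
  have hcont : Continuous ((cyl1 n w).indicator (1 : Cfg1 A → ℝ)) := by
    rw [cyl1_eq_preimage]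
    exact (continuous_of_discreteTopology (f := Set.indicator {w} (1 : (Fin n → A) → ℝ))).comp
      (continuous_pi fun i => continuous_apply (i : ℕ))
  simpa only [integral_indicator_one (measurableSet_cyl1 n w)] using hlim _ hcont

theorem le_entropy1_of_tendsto [l.NeBot] [∀ i, IsProbabilityMeasure (μs i)]
    (hlim : ∀ f : Cfg1 A → ℝ, Continuous f →
      Tendsto (fun i => ∫ x, f x ∂μs i) l (𝓝 (∫ x, f x ∂μ)))
    {h : ℝ} (hh : ∀ᶠ i in l, h ≤ entropy1 (μs i)) : h ≤ entropy1 μ :=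
  le_entropy1 fun n _ => ge_of_tendsto (tendsto_blockEntropy hlim n) <| hh.mono fun i hi =>
    (mul_le_mul_of_nonneg_left hi n.cast_nonneg).trans (mul_entropy1_le_blockEntropy n (μs i))

/-- The empirical averages are taken over factorial lengths, so that every block length eventually
divides them. -/
theorem exists_invariant1_topEnt1_le_entropy1 [Nonempty A] {Y : Set (Cfg1 A)}
    (hclosed : IsClosed Y) (hY : Set.MapsTo shift1 Y Y) (hne : Y.Nonempty) :
    ∃ μ : Measure (Cfg1 A), IsProbabilityMeasure μ ∧ Invariant1 μ ∧ μ Y = 1 ∧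
      topEnt1 Y ≤ entropy1 μ := by
  choose ν hν hνY hent using fun n : ℕ =>
    exists_measure_mul_topEnt1_le_blockEntropy hclosed.measurableSet hne n.factorial
  set P : ℕ → ProbabilityMeasure (Cfg1 A) := fun n =>
    ⟨_, isProbabilityMeasure_shiftAverage n.factorial_ne_zero (ν n)⟩
  set U : Ultrafilter ℕ := hyperfilter ℕ
  have hU : (U : Filter ℕ) ≤ atTop := Nat.hyperfilter_le_atTop
  set μ : ProbabilityMeasure (Cfg1 A) := (U.map P).lim
  have hPμ : Tendsto P U (𝓝 μ) := (U.map P).le_nhds_lim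
  have hlim : ∀ f : Cfg1 A → ℝ, Continuous f →
      Tendsto (fun n => ∫ x, f x ∂(P n : Measure (Cfg1 A))) U (𝓝 (∫ x, f x ∂μ)) := fun f hf =>
    ProbabilityMeasure.tendsto_iff_forall_integral_tendsto.1 hPμ
      (BoundedContinuousFunction.mkOfCompact ⟨f, hf⟩)
  have hfactorial : Tendsto (fun n : ℕ => ((n.factorial : ℕ) : ℝ)⁻¹) U (𝓝 0) := by
    simpa using (FloorSemiring.tendsto_pow_div_factorial_atTop (1 : ℝ)).mono_left hU
  refine ⟨μ, inferInstance, invariant1_of_tendsto hlim fun f hf => ?_, ?_,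
    le_entropy1 fun m hm => ?_⟩
  · set F := BoundedContinuousFunction.mkOfCompact ⟨f, hf⟩
    refine squeeze_zero_norm (fun n => abs_integral_comp_shift1_sub_le hf.measurable
      F.norm_coe_le_norm) ?_
    simpa using hfactorial.mul_const (2 * ‖F‖)
  · exact measure_eq_one_of_tendsto hPμ hclosed fun n =>
      measureReal_shiftAverage_eq_one hclosed.measurableSet hY n.factorial_ne_zero (hνY n)
  · have hright := (hfactorial.mul_const (m * (m * Real.log (Fintype.card A)))).add
      (tendsto_blockEntropy hlim m)
    rw [zero_mul, zero_add] at hright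
    refine ge_of_tendsto hright (hU ?_)
    filter_upwards [eventually_ge_atTop m] with n hn
    obtain ⟨q, hq⟩ := Nat.dvd_factorial hm hn
    have h := le_blockEntropy_shiftAverage (hq ▸ n.factorial_ne_zero) (hq ▸ hent n)
    rwa [← hq] at h

end WeakLimit

section Pressure

theorem integral_birkhoffSum {A : Type} [MeasurableSpace A] {μ : Measure (Cfg1 A)}
    (hμ : Invariant1 μ) {f : Cfg1 A → ℝ} (hf : Integrable f μ) (n : ℕ) :
    ∫ x, birkhoffSum shift1 f n x ∂μ = n * ∫ x, f x ∂μ := by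
  have hpres : ∀ k, MeasurePreserving shift1^[k] μ μ :=
    (⟨measurable_shift1, hμ⟩ : MeasurePreserving shift1 μ μ).iterate
  have hiter : ∀ k, ∫ x, f (shift1^[k] x) ∂μ = ∫ x, f x ∂μ := fun k => by
    conv_rhs => rw [← (hpres k).map_eq]
    exact (integral_map (hpres k).aemeasurable
      ((hpres k).map_eq.symm ▸ hf.aestronglyMeasurable)).symm
  simp only [birkhoffSum]
  rw [integral_finsetSum (f := fun k x => f (shift1^[k] x)) _ fun k _ =>
    (hpres k).integrable_comp_of_integrable hf]
  simp [hiter]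

theorem tendsto_inv_mul_add_mul_log (c : ℝ) (D : ℕ) :
    Tendsto (fun n : ℕ => (n : ℝ)⁻¹ * (c + D * Real.log (n + 1))) atTop (𝓝 0) := by
  have hlog : Tendsto (fun n : ℕ => Real.log (n + 1) / (n + 1)) atTop (𝓝 0) :=
    Real.isLittleO_log_id_atTop.tendsto_div_nhds_zero.comp
      (tendsto_atTop_add_const_right _ 1 tendsto_natCast_atTop_atTop)
  have hsum := (tendsto_inv_atTop_nhds_zero_nat.mul_const c).add
    ((hlog.mul (tendsto_inv_atTop_nhds_zero_nat.const_add (1 : ℝ))).const_mul (D : ℝ))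
  rw [show 0 * c + (D : ℝ) * (0 * (1 + 0)) = 0 by ring] at hsum
  refine hsum.congr' ?_
  filter_upwards [eventually_gt_atTop 0] with n hn
  field_simp

variable {A : Type} [TopologicalSpace A] [DiscreteTopology A] [MeasurableSpace A] [BorelSpace A]
  {μ : Measure (Cfg1 A)} {φ : Cfg1 A → ℝ} {β h : ℝ}

theorem integrable_of_continuous [Finite A] [IsProbabilityMeasure μ] (hφ : Continuous φ) :
    Integrable φ μ :=
  hφ.integrable_of_hasCompactSupport (.of_compactSpace φ)

variable [Fintype A] [Nonempty A]

theorem entropy1_add_mul_integral_le_of_wordSum_weight_le [IsProbabilityMeasure μ]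
    (hμ : Invariant1 μ) (hcont : Continuous φ) (hφ : ∀ x, φ x ≤ 0) (hβ : 0 ≤ β) {C : ℝ} {D : ℕ}
    (hC : 0 < C)
    (hweight : ∀ n, wordSum n (weight φ β n) ≤ C * (n + 1 : ℝ) ^ D * Real.exp h ^ n) :
    entropy1 μ + β * ∫ x, φ x ∂μ ≤ h := by
  have hlog : ∀ n : ℕ, n * (entropy1 μ + β * ∫ x, φ x ∂μ) ≤
      Real.log C + D * Real.log (n + 1) + n * h := fun n => by
    have hint : Integrable (fun x => β * birkhoffSum shift1 φ n x) μ :=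
      integrable_of_continuous <| continuous_const.mul <| continuous_finsetSum _ fun k _ =>
        hcont.comp (continuous_shift1.iterate k)
    have hgibbs := blockEntropy_add_integral_le hint fun x y => exp_birkhoffSum_le_weight hφ hβ
    rw [integral_const_mul, integral_birkhoffSum hμ (integrable_of_continuous hcont)] at hgibbs
    have hpos : 0 < wordSum n (weight φ β n) := Finset.sum_pos (fun w _ => (Real.exp_pos _).trans_le
      (exp_birkhoffSum_le_weight hφ hβ (PiNat.self_mem_cylinder _ n))) Finset.univ_nonempty
    have hupper := Real.log_le_log hpos (hweight n)
    rw [Real.log_mul (by positivity) (by positivity), Real.log_mul (by positivity) (by positivity),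
      Real.log_pow, Real.log_pow, Real.log_exp] at hupper
    linarith [mul_entropy1_le_blockEntropy n μ]
  have hlim := (tendsto_inv_mul_add_mul_log (Real.log C) D).add_const h
  rw [zero_add] at hlim
  refine ge_of_tendsto hlim ?_
  filter_upwards [eventually_gt_atTop 0] with n hn
  calc _ ≤ (n : ℝ)⁻¹ * (Real.log C + D * Real.log (n + 1) + n * h) :=
        (le_inv_mul_iff₀ (by positivity)).2 (hlog n)
    _ = _ := by field_simp

theorem le_pressure1 [IsProbabilityMeasure μ] (hμ : Invariant1 μ) (hφ : Continuous φ) (β : ℝ) :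
    entropy1 μ + β * ∫ x, φ x ∂μ ≤ pressure1 φ β := by
  set F := BoundedContinuousFunction.mkOfCompact ⟨φ, hφ⟩
  refine le_csSup ⟨Real.log (Fintype.card A) + |β| * ‖F‖, ?_⟩ ⟨μ, ‹_›, hμ, rfl⟩
  rintro _ ⟨ν, hν, -, rfl⟩
  have hent := (mul_entropy1_le_blockEntropy 1 ν).trans (blockEntropy_le_mul_log_card 1 ν)
  have hint : |∫ x, φ x ∂ν| ≤ ‖F‖ := F.norm_integral_le_norm ν
  refine add_le_add (by simpa using hent) ((le_abs_self _).trans ?_)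
  rw [abs_mul]
  gcongr

theorem pressure1_le (H : ∀ ν : Measure (Cfg1 A), IsProbabilityMeasure ν → Invariant1 ν →
    entropy1 ν + β * ∫ x, φ x ∂ν ≤ h) : pressure1 φ β ≤ h := by
  obtain ⟨μ, hprob, hμ, -⟩ := exists_invariant1_topEnt1_le_entropy1 (A := A) isClosed_univ
    (Set.mapsTo_univ _ _) Set.univ_nonempty
  refine csSup_le ⟨_, μ, hprob, hμ, rfl⟩ ?_
  rintro _ ⟨ν, hν, hinv, rfl⟩
  exact H ν hν hinv

theorem antitone_pressure1 (hcont : Continuous φ) (hφ : ∀ x, φ x ≤ 0) :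
    Antitone (pressure1 φ) := fun _ _ hβ => pressure1_le fun _ _ hν =>
  (add_le_add_right (mul_le_mul_of_nonpos_right hβ (integral_nonpos hφ)) _).trans
    (le_pressure1 hν hcont _)

theorem exists_log_card_add_mul_le_pressure1 (hcont : Continuous φ) (hφ : ∀ x, φ x ≤ 0) :
    ∃ I ≤ 0, ∀ β, Real.log (Fintype.card A) + β * I ≤ pressure1 φ β := by
  obtain ⟨μ, hprob, hμ, -, hent⟩ := exists_invariant1_topEnt1_le_entropy1 (A := A) isClosed_univ
    (Set.mapsTo_univ _ _) Set.univ_nonempty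
  exact ⟨∫ x, φ x ∂μ, integral_nonpos hφ, fun β =>
    (add_le_add_left (log_card_le_topEnt1_univ.trans hent) _).trans (le_pressure1 hμ hcont β)⟩

end Pressure

section Penalty

theorem integral_eq_zero_iff_measure_eq_one {α : Type*} [MeasurableSpace α] {μ : Measure α}
    [IsProbabilityMeasure μ] {f : α → ℝ} (hf : ∀ x, f x ≤ 0) (hint : Integrable f μ) {Y : Set α}
    (hY : MeasurableSet Y) (hzero : ∀ x, f x = 0 ↔ x ∈ Y) : ∫ x, f x ∂μ = 0 ↔ μ Y = 1 := by
  rw [← mem_ae_iff_prob_eq_one hY, ← neg_eq_zero, ← integral_neg,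
    integral_eq_zero_iff_of_nonneg (fun x => neg_nonneg.2 (hf x)) hint.neg]
  exact Filter.eventually_congr (ae_of_all _ fun x => neg_eq_zero.trans (hzero x))

variable {A : Type} [TopologicalSpace A]

/-- `φ` penalizes leaving `Y`: it is continuous, nonpositive, and vanishes exactly on `Y`. -/
structure IsPenalty (φ : Cfg1 A → ℝ) (Y : Set (Cfg1 A)) : Prop where
  continuous : Continuous φ
  nonpos : ∀ x, φ x ≤ 0
  eq_zero_iff : ∀ x, φ x = 0 ↔ x ∈ Y

variable {φ : Cfg1 A → ℝ} {Y : Set (Cfg1 A)}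

theorem IsPenalty.isClosed (hφ : IsPenalty φ Y) : IsClosed Y := by
  have : Y = φ ⁻¹' {0} := Set.ext fun x => (hφ.eq_zero_iff x).symm
  exact this ▸ isClosed_singleton.preimage hφ.continuous

variable [DiscreteTopology A] [MeasurableSpace A] [BorelSpace A] {μ : Measure (Cfg1 A)}

theorem IsPenalty.integral_eq_zero_iff [Finite A] [IsProbabilityMeasure μ] (hφ : IsPenalty φ Y) :
    ∫ x, φ x ∂μ = 0 ↔ μ Y = 1 :=
  integral_eq_zero_iff_measure_eq_one hφ.nonpos (integrable_of_continuous hφ.continuous)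
    hφ.isClosed.measurableSet hφ.eq_zero_iff

variable [Fintype A] {β : ℝ}

theorem IsPenalty.mem_ES1_iff_of_isMME1 (hφ : IsPenalty φ Y) (hμ : IsMME1 Y μ) :
    μ ∈ ES1 φ β ↔ pressure1 φ β = topEnt1 Y := by
  have := hμ.1
  simp [ES1, hμ.1, hμ.2.1, hμ.2.2.2, hφ.integral_eq_zero_iff.2 hμ.2.2.1, eq_comm]

variable [Nonempty A]

theorem IsPenalty.entropy1_le_pressure1 [IsProbabilityMeasure μ] (hφ : IsPenalty φ Y)
    (hμ : Invariant1 μ) (hμY : μ Y = 1) (β : ℝ) : entropy1 μ ≤ pressure1 φ β := by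
  simpa [hφ.integral_eq_zero_iff.2 hμY] using le_pressure1 hμ hφ.continuous β

theorem IsPenalty.exists_isMME1 (hφ : IsPenalty φ Y) (hne : Y.Nonempty)
    (hinv : Set.MapsTo shift1 Y Y) (hβ : pressure1 φ β ≤ topEnt1 Y) : ∃ μ, IsMME1 Y μ := by
  obtain ⟨μ, hprob, hμ, hμY, hent⟩ :=
    exists_invariant1_topEnt1_le_entropy1 hφ.isClosed hinv hne
  exact ⟨μ, hprob, hμ, hμY, hent.antisymm' ((hφ.entropy1_le_pressure1 hμ hμY β).trans hβ)⟩

theorem IsPenalty.ES1_eq_setOf_isMME1 (hφ : IsPenalty φ Y) (hne : Y.Nonempty)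
    (hinv : Set.MapsTo shift1 Y Y) (hβ : pressure1 φ β ≤ topEnt1 Y) {β' : ℝ} (hlt : β < β') :
    ES1 φ β' = {μ | IsMME1 Y μ} := by
  obtain ⟨μ₀, hμ₀⟩ := hφ.exists_isMME1 hne hinv hβ
  have hprob₀ := hμ₀.1
  have hpressure : pressure1 φ β' = topEnt1 Y :=
    ((antitone_pressure1 hφ.continuous hφ.nonpos hlt.le).trans hβ).antisymm
      (hμ₀.2.2.2 ▸ hφ.entropy1_le_pressure1 hμ₀.2.1 hμ₀.2.2.1 β')
  ext μ
  refine ⟨fun ⟨hprob, hμ, heq⟩ => ?_, fun hμ => ?_⟩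
  · have hle : entropy1 μ + β * ∫ x, φ x ∂μ ≤ entropy1 μ + β' * ∫ x, φ x ∂μ :=
      (le_pressure1 hμ hφ.continuous β).trans (hβ.trans (heq.trans hpressure).ge)
    have hint : ∫ x, φ x ∂μ = 0 := (integral_nonpos hφ.nonpos).antisymm <|
      (mul_nonneg_iff_of_pos_left (sub_pos.2 hlt)).1 (by linarith)
    refine ⟨hprob, hμ, hφ.integral_eq_zero_iff.1 hint, ?_⟩
    simpa [hint, hpressure] using heq
  · exact (hφ.mem_ES1_iff_of_isMME1 hμ).2 hpressure

theorem IsPenalty.isMME1_of_tendsto [IsProbabilityMeasure μ] (hφ : IsPenalty φ Y)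
    (hβ : pressure1 φ β ≤ topEnt1 Y) (hμ : Invariant1 μ) {μs : ℕ → Measure (Cfg1 A)}
    [∀ k, IsProbabilityMeasure (μs k)]
    (hμs : ∀ᶠ k in atTop, IsMME1 Y (μs k))
    (hlim : ∀ f : Cfg1 A → ℝ, Continuous f →
      Tendsto (fun k => ∫ x, f x ∂μs k) atTop (𝓝 (∫ x, f x ∂μ))) :
    IsMME1 Y μ := by
  have hint : ∫ x, φ x ∂μ = 0 := by
    refine tendsto_nhds_unique (hlim φ hφ.continuous) (tendsto_const_nhds.congr' ?_)
    filter_upwards [hμs] with k hk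
    exact (hφ.integral_eq_zero_iff.2 hk.2.2.1).symm
  have hμY := hφ.integral_eq_zero_iff.1 hint
  exact ⟨‹_›, hμ, hμY, ((hφ.entropy1_le_pressure1 hμ hμY β).trans hβ).antisymm
    (le_entropy1_of_tendsto hlim (hμs.mono fun k hk => hk.2.2.2.ge))⟩

theorem IsPenalty.ZTA1_eq_setOf_isMME1 (hφ : IsPenalty φ Y) (hβ : pressure1 φ β ≤ topEnt1 Y)
    {βc : ℝ} (hfrozen : ∀ b, βc < b → ES1 φ b = {μ | IsMME1 Y μ}) :
    ZTA1 φ = {μ | IsMME1 Y μ} := by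
  refine Set.Subset.antisymm ?_ fun μ hμ => ?_
  · rintro μ ⟨hprob, hμ, b, μs, hb, hes, hlim⟩
    have hprobs : ∀ k, IsProbabilityMeasure (μs k) := fun k => (hes k).1
    refine hφ.isMME1_of_tendsto hβ hμ ?_ hlim
    filter_upwards [hb.eventually_gt_atTop βc] with k hk
    exact (hfrozen _ hk).le (hes k)
  · refine ⟨hμ.1, hμ.2.1, fun k => βc + 1 + k, fun _ => μ,
      tendsto_atTop_add_const_left _ _ tendsto_natCast_atTop_atTop, fun k => ?_,
      fun _ _ => tendsto_const_nhds⟩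
    exact (hfrozen _ (by linarith [k.cast_nonneg (α := ℝ)])).ge hμ

theorem IsPenalty.exists_freezingPT1_of_pressure1_le (hφ : IsPenalty φ Y) (hne : Y.Nonempty)
    (hinv : Set.MapsTo shift1 Y Y) (hent : topEnt1 Y < Real.log (Fintype.card A))
    (hβ : pressure1 φ β ≤ topEnt1 Y) :
    ∃ βc : ℝ, 0 < βc ∧ FreezingPT1 φ βc ∧ ZTA1 φ = {μ | IsMME1 Y μ} := by
  set S : Set ℝ := {b | pressure1 φ b ≤ topEnt1 Y}
  have hSne : S.Nonempty := ⟨β, hβ⟩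
  obtain ⟨I, hI, hIle⟩ := exists_log_card_add_mul_le_pressure1 hφ.continuous hφ.nonpos
  have hIneg : I < 0 := hI.lt_of_ne fun h => by
    have := (hIle β).trans hβ
    rw [h, mul_zero, add_zero] at this
    exact this.not_gt hent
  have hSbound : ∀ b ∈ S, (topEnt1 Y - Real.log (Fintype.card A)) / I ≤ b := fun b hb => by
    rw [div_le_iff_of_neg hIneg]
    linarith [(hIle b).trans hb]
  have hfrozen : ∀ b, sInf S < b → ES1 φ b = {μ | IsMME1 Y μ} := fun b hb => by
    obtain ⟨b₀, hb₀, hlt⟩ := exists_lt_of_csInf_lt hSne hb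
    exact hφ.ES1_eq_setOf_isMME1 hne hinv hb₀ hlt
  obtain ⟨μ₀, hμ₀⟩ := hφ.exists_isMME1 hne hinv hβ
  refine ⟨sInf S, (div_pos_of_neg_of_neg (sub_neg.2 hent) hIneg).trans_le (le_csInf hSne hSbound),
    ⟨fun b b' hb hb' => (hfrozen b hb).trans (hfrozen b' hb').symm, fun b b' hb hb' heq => ?_⟩,
    hφ.ZTA1_eq_setOf_isMME1 hβ hfrozen⟩
  have hmem : μ₀ ∈ ES1 φ b := heq ▸ (hfrozen b' hb').ge hμ₀
  have hbS : b ∈ S := ((hφ.mem_ES1_iff_of_isMME1 hμ₀).1 hmem).le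
  exact (csInf_le ⟨_, hSbound⟩ hbS).not_gt hb

end Penalty

section OneStepSFT

variable {A : Type} [TopologicalSpace A] [DiscreteTopology A] {T : Set (A × A)} {a : ℕ → ℝ}

theorem isPenalty_distPotential {Y : Set (Cfg1 A)} (hY : IsClosed Y) (hne : Y.Nonempty)
    (ha : ∀ j, 0 < a j) (hlim : Tendsto a atTop (𝓝 0)) : IsPenalty (distPotential Y a) Y :=
  ⟨continuous_distPotential hY hne hlim, distPotential_nonpos Y ha,
    fun _ => distPotential_eq_zero_iff ha⟩

theorem exists_pressure1_distPotential_le [Fintype A] [MeasurableSpace A] [BorelSpace A]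
    (hne : (oneStepSFT T).Nonempty) (ha : ∀ j, 0 < a j) (hlim : Tendsto a atTop (𝓝 0)) {c : ℝ}
    (hc : 0 < c) (hsum : ∀ j : ℕ, c * Real.log (j + 1) ≤ ∑ i ∈ Finset.range j, a (i + 1)) :
    ∃ β, pressure1 (distPotential (oneStepSFT T) a) β ≤ topEnt1 (oneStepSFT T) := by
  have : Nonempty A := ⟨hne.some 0⟩
  have hφ := isPenalty_distPotential (isClosed_oneStepSFT T) hne ha hlim
  obtain ⟨C, D, hC, hcount⟩ := exists_wordCount_cylinderHull_le T
  obtain ⟨β, hβ, hweight⟩ := exists_wordSum_weight_le hne hφ.nonpos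
    (lt_min (half_pos hc) (ha 0)) hC (Real.one_le_exp (topEnt1_nonneg _)) hcount
    fun j x => birkhoffSum_succ_distPotential_le hne ha hc hsum
  refine ⟨β, pressure1_le fun μ hprob hμ => entropy1_add_mul_integral_le_of_wordSum_weight_le hμ
    hφ.continuous hφ.nonpos hβ.le (C := 2 * C) (D := D) (by positivity) fun n => ?_⟩
  simpa only [mul_assoc] using hweight n

end OneStepSFT

theorem log_add_one_le_sum_of_inv_le {a : ℕ → ℝ} (ha : ∀ j : ℕ, 1 ≤ j → (1 : ℝ) / j ≤ a j)
    (n : ℕ) : Real.log (n + 1) ≤ ∑ i ∈ Finset.range n, a (i + 1) :=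
  calc Real.log (n + 1) ≤ (harmonic n : ℝ) := by exact_mod_cast log_add_one_le_harmonic n
    _ = ∑ i ∈ Finset.range n, (1 : ℝ) / (i + 1 : ℕ) := by simp [harmonic]
    _ ≤ _ := Finset.sum_le_sum fun i _ => ha (i + 1) i.succ_pos

theorem statement11_general {A : Type} [Fintype A] [TopologicalSpace A] [DiscreteTopology A]
    [MeasurableSpace A] [BorelSpace A] {T : Set (A × A)} (hne : (oneStepSFT T).Nonempty)
    (hproper : oneStepSFT T ≠ Set.univ) {a : ℕ → ℝ} (hpos : ∀ j, 0 < a j)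
    (hlim : Tendsto a atTop (𝓝 0)) {c : ℝ} (hc : 0 < c)
    (hsum : ∀ j : ℕ, c * Real.log (j + 1) ≤ ∑ i ∈ Finset.range j, a (i + 1))
    {φ : Cfg1 A → ℝ} (hφ0 : ∀ x ∈ oneStepSFT T, φ x = 0)
    (hφ1 : ∀ x ∉ oneStepSFT T, ∀ j : ℕ,
      distToSub1 (oneStepSFT T) x = (2 : ℝ) ^ (-(j : ℤ)) → φ x = -(a j)) :
    ∃ βc : ℝ, 0 < βc ∧ FreezingPT1 φ βc ∧ ZTA1 φ = {μ | IsMME1 (oneStepSFT T) μ} := by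
  have : Nonempty A := ⟨hne.some 0⟩
  have hclosed := isClosed_oneStepSFT T
  obtain rfl := eq_distPotential hclosed hne hφ0 hφ1
  obtain ⟨β, hβ⟩ := exists_pressure1_distPotential_le hne hpos hlim hc hsum
  exact (isPenalty_distPotential hclosed hne hpos hlim).exists_freezingPT1_of_pressure1_le hne
    (mapsTo_shift1_oneStepSFT T) (topEnt1_lt_log_card hclosed hne hproper) hβ

/-- **Theorem 5.1, one-sided SFTs.** Let `X₀⁺` be a nonempty proper one-step
subshift of finite type determined by allowed transitions `T`, and let `(a_j)` be a decreasing
positive null sequence with `a_j ≥ 1/j`. Then the potential `φ⁺` (vanishing on `X₀⁺`, equal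
to `-a_j` where `dist(x, X₀⁺) = 2^{-j}`) has a freezing phase transition at some `β_c > 0`,
and `ZTA(φ⁺)` is the set of measures of maximal entropy of `X₀⁺`. -/
theorem statement11 (A : Type) [Fintype A] [TopologicalSpace A] [DiscreteTopology A]
    [MeasurableSpace A] [BorelSpace A]
    (T : Set (A × A)) (X₀ : Set (Cfg1 A))
    (hX₀ : X₀ = { x : Cfg1 A | ∀ i : ℕ, (x i, x (i + 1)) ∈ T })
    (hne : X₀.Nonempty) (hproper : X₀ ≠ Set.univ)
    (a : ℕ → ℝ) (hpos : ∀ j, 0 < a j) (hdec : Antitone a)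
    (hlim : Tendsto a atTop (𝓝 0))
    (ha : ∀ j : ℕ, 1 ≤ j → (1 : ℝ) / j ≤ a j)
    (φ : Cfg1 A → ℝ)
    (hφ0 : ∀ x ∈ X₀, φ x = 0)
    (hφ1 : ∀ x ∉ X₀, ∀ j : ℕ, distToSub1 X₀ x = (2 : ℝ) ^ (-(j : ℤ)) → φ x = -(a j)) :
    ∃ βc : ℝ, 0 < βc ∧ FreezingPT1 φ βc ∧ ZTA1 φ = { μ | IsMME1 X₀ μ } := by
  subst hX₀
  exact statement11_general hne hproper hpos hlim one_pos
    (by simpa only [one_mul] using log_add_one_le_sum_of_inv_le ha) hφ0 hφ1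

end Freezing
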